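/- arXiv:2403.11471 — 9 statements merged into one kernel-verified Lean document; each statement's English description precedes it below -/
import Mathlib

section
/- Let ℓ > 1, m > 0 and k > 0 be reals, and let v : [0,1] → ℝ be continuously differentiable with v(0) = 0 and |v(Z)| < 1 for all Z ∈ [0,1]. If ((1 − Z·v(Z))² − ℓ·(v(Z) − Z)²)·v′(Z) = (1 − v(Z)²)·(m·(1 − v(Z)²) − k·v(Z)·(1/Z − v(Z))) for every Z ∈ (0,1], then k > m·(1 + 1/√ℓ). -/
open Set

/-!
At a sonic point, where the self-similar observer moves at the speed of sound `c = 1/√ℓ` relative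
to the fluid, the coefficient of `v'` vanishes, so the right-hand side has to vanish as well. This
turns the equation into the algebraic relation `k w = m (w + c)` for the sonic velocity `w`. The
vanishing of the right-hand side also gives `w > 0`, and then `w < 1` yields
`k = m (1 + c / w) > m (1 + c)`. A sonic point exists by the intermediate value theorem: the
relative velocity is `0` at `Z = 0` and `1`, the speed of light, at `Z = 1`.
-/

/-- The self-similar observer with velocity `Z` moves at speed `c` relative to a fluid with velocity
`w`: the relativistic difference `(Z - w) / (1 - Z * w)` equals `c`, with the denominator cleared.
For `c` the speed of sound this is the condition for a sonic point. -/
def IsSonic {K : Type*} [CommRing K] (c Z w : K) : Prop :=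
  Z - w = c * (1 - Z * w)

namespace IsSonic

theorem coeff_deriv_eq_zero {K : Type*} [CommRing K] {ℓ c Z w : K} (h : IsSonic c Z w)
    (hc : ℓ * c ^ 2 = 1) : (1 - Z * w) ^ 2 - ℓ * (w - Z) ^ 2 = 0 := by
  have h_diff : w - Z = -(c * (1 - Z * w)) := by rw [← neg_sub, h]
  rw [h_diff]
  linear_combination -(1 - Z * w) ^ 2 * hc

theorem mul_one_add_eq {K : Type*} [CommRing K] {c Z w : K} (h : IsSonic c Z w) :
    Z * (1 + c * w) = w + c := by
  have h_diff : Z - w = c * (1 - Z * w) := h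
  linear_combination h_diff

theorem mul_eq_mul_add_of_balance {K : Type*} [Field K] {m k c Z w : K} (h : IsSonic c Z w)
    (hZ : Z ≠ 0) (hw : 1 - w ^ 2 ≠ 0)
    (h_balance : m * (1 - w ^ 2) = k * w * (1 / Z - w)) : k * w = m * (w + c) := by
  have h_add : Z * (1 + c * w) = w + c := h.mul_one_add_eq
  have h_lorentz : (1 - Z * w) * (1 + c * w) = 1 - w ^ 2 := by linear_combination -w * h_add
  have h_inv : Z * (1 / Z - w) = 1 - Z * w := by rw [mul_sub, mul_one_div_cancel hZ]
  refine mul_left_cancel₀ hw ?_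
  calc (1 - w ^ 2) * (k * w)
      = k * w * (Z * (1 / Z - w)) * (1 + c * w) := by rw [h_inv, ← h_lorentz]; ring
    _ = m * (1 - w ^ 2) * (Z * (1 + c * w)) := by rw [h_balance]; ring
    _ = (1 - w ^ 2) * (m * (w + c)) := by rw [h_add]; ring

end IsSonic

section LinearOrderedField

variable {K : Type*} [Field K] [LinearOrder K] [IsStrictOrderedRing K] {m k c Z w : K}

theorem one_sub_sq_pos_of_abs_lt_one (hw : |w| < 1) : 0 < 1 - w ^ 2 :=
  sub_pos.2 ((sq_lt_one_iff_abs_lt_one w).2 hw)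

theorem velocity_pos_of_balance (hm : 0 < m) (hk : 0 < k) (hZ : Z ∈ Ioc 0 1) (hw : |w| < 1)
    (h_balance : m * (1 - w ^ 2) = k * w * (1 / Z - w)) : 0 < w := by
  have h_source : 0 < m * (1 - w ^ 2) := mul_pos hm (one_sub_sq_pos_of_abs_lt_one hw)
  have h_gap : 0 < 1 / Z - w :=
    sub_pos.2 ((abs_lt.1 hw).2.trans_le (one_le_one_div hZ.1 hZ.2))
  rw [h_balance] at h_source
  exact pos_of_mul_pos_right (pos_of_mul_pos_left h_source h_gap.le) hk.le

theorem IsSonic.mul_one_add_lt_of_balance (h : IsSonic c Z w) (hm : 0 < m) (hk : 0 < k)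
    (hc : 0 < c) (hZ : Z ∈ Ioc 0 1) (hw : |w| < 1)
    (h_balance : m * (1 - w ^ 2) = k * w * (1 / Z - w)) : m * (1 + c) < k := by
  have hw_pos : 0 < w := velocity_pos_of_balance hm hk hZ hw h_balance
  have hw_sq : 1 - w ^ 2 ≠ 0 := (one_sub_sq_pos_of_abs_lt_one hw).ne'
  refine lt_of_mul_lt_mul_right ?_ hw_pos.le
  calc m * (1 + c) * w = m * (w + c * w) := by ring
    _ < m * (w + c) := by gcongr; exact mul_lt_of_lt_one_right hc (abs_lt.1 hw).2
    _ = k * w := (h.mul_eq_mul_add_of_balance hZ.1.ne' hw_sq h_balance).symm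

end LinearOrderedField

theorem exists_isSonic {v : ℝ → ℝ} {c : ℝ} (hc : c ≤ 1) (hv : ContinuousOn v (Icc 0 1))
    (hv0 : -c < v 0) (hv1 : v 1 ≤ 1) : ∃ Z ∈ Ioc (0 : ℝ) 1, IsSonic c Z (v Z) := by
  let f : ℝ → ℝ := fun Z => Z - v Z - c * (1 - Z * v Z)
  have hf : ContinuousOn f (Icc 0 1) := by fun_prop
  have hf0 : f 0 < 0 := by simp only [f]; linarith
  have hf1 : 0 ≤ f 1 := by
    have h_factor : f 1 = (1 - c) * (1 - v 1) := by simp only [f]; ring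
    rw [h_factor]
    exact mul_nonneg (sub_nonneg.2 hc) (sub_nonneg.2 hv1)
  obtain ⟨Z, hZ, hfZ⟩ := intermediate_value_Ioc zero_le_one hf ⟨hf0, hf1⟩
  exact ⟨Z, hZ, sub_eq_zero.1 hfZ⟩

theorem parameter_range_of_solution_general (ℓ m k : ℝ) (hℓ : 1 ≤ ℓ) (hm : 0 < m) (hk : 0 < k)
    (v v' : ℝ → ℝ)
    (hderiv : ∀ Z ∈ Icc (0 : ℝ) 1, HasDerivWithinAt v (v' Z) (Icc 0 1) Z)
    (hv0 : v 0 = 0)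
    (hbound : ∀ Z ∈ Icc (0 : ℝ) 1, |v Z| < 1)
    (hode : ∀ Z ∈ Ioc (0 : ℝ) 1,
      ((1 - Z * v Z) ^ 2 - ℓ * (v Z - Z) ^ 2) * v' Z
        = (1 - (v Z) ^ 2) * (m * (1 - (v Z) ^ 2) - k * v Z * (1 / Z - v Z))) :
    k > m * (1 + 1 / Real.sqrt ℓ) := by
  have hℓ_pos : 0 < ℓ := one_pos.trans_le hℓ
  have hc_pos : 0 < 1 / √ℓ := one_div_pos.2 (Real.sqrt_pos.2 hℓ_pos)
  have hc_le : 1 / √ℓ ≤ 1 := div_le_one_of_le₀ (Real.one_le_sqrt.2 hℓ) (Real.sqrt_nonneg ℓ)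
  have hc_sq : ℓ * (1 / √ℓ) ^ 2 = 1 := by
    rw [one_div, inv_pow, Real.sq_sqrt hℓ_pos.le, mul_inv_cancel₀ hℓ_pos.ne']
  have hv1 : v 1 ≤ 1 := (le_abs_self _).trans (hbound 1 (right_mem_Icc.2 zero_le_one)).le
  obtain ⟨Z, hZ, h_sonic⟩ := exists_isSonic hc_le
    (fun Z hZ => (hderiv Z hZ).continuousWithinAt) (by rw [hv0]; exact neg_neg_of_pos hc_pos) hv1
  have hw : |v Z| < 1 := hbound Z (Ioc_subset_Icc_self hZ)
  have hw_sq : 1 - v Z ^ 2 ≠ 0 := (one_sub_sq_pos_of_abs_lt_one hw).ne'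
  have h_rhs : (1 - v Z ^ 2) * (m * (1 - v Z ^ 2) - k * v Z * (1 / Z - v Z)) = 0 := by
    rw [← hode Z hZ, h_sonic.coeff_deriv_eq_zero hc_sq, zero_mul]
  have h_balance := sub_eq_zero.1 ((mul_eq_zero.1 h_rhs).resolve_left hw_sq)
  exact h_sonic.mul_one_add_lt_of_balance hm hk hc_pos hZ hw h_balance

/-- Necessary restriction on the parameters: any `C¹` solution `v : [0,1] → (-1,1)` of the
self-similar relativistic Euler ODE with `v(0) = 0` forces `k > m (1 + 1/√ℓ)`. -/
theorem parameter_range_of_solution (ℓ m k : ℝ) (hℓ : 1 < ℓ) (hm : 0 < m) (hk : 0 < k)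
    (v v' : ℝ → ℝ)
    (hderiv : ∀ Z ∈ Icc (0 : ℝ) 1, HasDerivWithinAt v (v' Z) (Icc 0 1) Z)
    (hcont : ContinuousOn v' (Icc 0 1))
    (hv0 : v 0 = 0)
    (hbound : ∀ Z ∈ Icc (0 : ℝ) 1, |v Z| < 1)
    (hode : ∀ Z ∈ Ioc (0 : ℝ) 1,
      ((1 - Z * v Z) ^ 2 - ℓ * (v Z - Z) ^ 2) * v' Z
        = (1 - (v Z) ^ 2) * (m * (1 - (v Z) ^ 2) - k * v Z * (1 / Z - v Z))) :
    k > m * (1 + 1 / Real.sqrt ℓ) :=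
  parameter_range_of_solution_general ℓ m k hℓ.le hm hk v v' hderiv hv0 hbound hode
end

section
/- Assume m > 0, ℓ > 1 and k is a positive integer with k > m·(1 + 1/√ℓ); set Z₁ := k√ℓ/(ℓ(k−m) + m) and v₁ := m/((k−m)√ℓ). Then there exists exactly one function v : [0, Z₁) → ℝ, infinitely differentiable on [0, Z₁), with v(0) = 0, Δ_Z(Z, v(Z)) > 0 for all Z ∈ (0, Z₁) and Δ_Z(Z, v(Z))·v′(Z) = Δ_v(Z, v(Z)) for all Z ∈ [0, Z₁); moreover this solution satisfies Δ_v(Z, v(Z)) > 0 and 0 < v(Z) < 1 for all Z ∈ (0, Z₁), v′(0) = m/(k+1), and v(Z) → v₁ as Z ↑ Z₁. -/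
/-!
Both `Δ_v` and `Δ_Z` vanish at the origin, which is a Briot–Bouquet singular point of the equation.
Writing `v (e t) = A h t`, where `A` is the averaging operator inverting `h = t v' + κ v`, turns the
equation into one for `h ∈ C([0, 1])` depending on the scale `e`, solvable by the implicit function
theorem near `e = 0`; since the dilations of a solution are again solutions, the curves for all `e`
are pieces of a single smooth function. It is unique because the squared difference of two
solutions is nonincreasing near the singular point.

Away from the origin the solution is trapped below the diagonal and above a curve slightly over
the sonic curve `1 - Z v = √ℓ (Z - v)`, on which `Δ_Z` vanishes, so that `Δ_Z` stays positive up to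
`Z₁`. The nontrivial factor of `Δ_v` is positive near the origin and increasing along the solution
at its zeros, hence stays positive. Thus the solution runs between the sonic curve and the zero
set of `Δ_v`, and these two curves meet at `P₁ = (Z₁, v₁)`.
-/

open Real Set Filter Topology

/-- Numerator of the self-similar relativistic Euler ODE `dv/dZ = Δ_v / Δ_Z`. -/
noncomputable def Deltav (m k Z v : ℝ) : ℝ :=
  (1 - v ^ 2) * (m * (1 - v ^ 2) * Z - k * v * (1 - v * Z))

/-- Denominator of the self-similar relativistic Euler ODE `dv/dZ = Δ_v / Δ_Z`. -/
noncomputable def DeltaZ (ℓ Z v : ℝ) : ℝ :=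
  Z * ((1 - Z * v) ^ 2 - ℓ * (v - Z) ^ 2)

section Superposition

universe u
variable {K : Type*} [TopologicalSpace K] [CompactSpace K]
  {E G : Type u} [NormedAddCommGroup E] [NormedSpace ℝ E] [NormedAddCommGroup G] [NormedSpace ℝ G]

/-- Pointwise application of a family of operators to a family of vectors, as a bounded bilinear
map; it is the shape of the derivative of a superposition operator. -/
noncomputable def pointwiseApply : C(K, E →L[ℝ] G) →L[ℝ] C(K, E) →L[ℝ] C(K, G) :=
  LinearMap.mkContinuous₂
    (LinearMap.mk₂ ℝ
      (fun (A : C(K, E →L[ℝ] G)) (h : C(K, E)) ↦ (⟨fun t ↦ A t (h t), by fun_prop⟩ : C(K, G)))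
      (fun _ _ _ ↦ by ext; simp) (fun _ _ _ ↦ by ext; simp)
      (fun _ _ _ ↦ by ext; simp) (fun _ _ _ ↦ by ext; simp)) 1 fun A h ↦ by
    rw [one_mul]
    refine (ContinuousMap.norm_le _ (by positivity)).2 fun t ↦ ?_
    exact ((A t).le_opNorm _).trans <|
      mul_le_mul (A.norm_coe_le_norm t) (h.norm_coe_le_norm t) (norm_nonneg _) (by positivity)

@[simp]
theorem pointwiseApply_apply (A : C(K, E →L[ℝ] G)) (h : C(K, E)) (t : K) :
    pointwiseApply A h t = A t (h t) := rfl

theorem hasFDerivAt_superposition {F : C(E, G)} {F' : C(E, E →L[ℝ] G)}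
    (hF : ∀ x, HasFDerivAt F (F' x) x) (h : C(K, E)) :
    HasFDerivAt (fun y : C(K, E) ↦ F.comp y) (pointwiseApply (F'.comp h)) h := by
  refine .of_isLittleO <| Asymptotics.isLittleO_iff.2 fun ε hε ↦ ?_
  have hcont : ContinuousAt (fun y : C(K, E) ↦ F'.comp y) h := F'.continuous_postcomp.continuousAt
  obtain ⟨δ, hδ, hball⟩ := Metric.eventually_nhds_iff.1
    (hcont.eventually (Metric.ball_mem_nhds (F'.comp h) hε))
  have oscillation_le (t : K) : ∀ x ∈ Metric.ball (h t) δ, ‖F' x - F' (h t)‖ ≤ ε := by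
    intro x hx
    have hdist : dist (h + .const K (x - h t)) h < δ := by
      rw [dist_eq_norm, add_sub_cancel_left]
      refine (ContinuousMap.norm_lt_iff _ hδ).2 fun _ ↦ ?_
      simpa [dist_eq_norm] using hx
    have hlt := (ContinuousMap.dist_apply_le_dist t).trans_lt (hball hdist)
    simpa [dist_eq_norm] using hlt.le
  filter_upwards [Metric.ball_mem_nhds h hδ] with y hy
  refine (ContinuousMap.norm_le _ (by positivity)).2 fun t ↦ ?_
  have hyt : y t ∈ Metric.ball (h t) δ := (ContinuousMap.dist_apply_le_dist t).trans_lt hy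
  have := (convex_ball (h t) δ).norm_image_sub_le_of_norm_hasFDerivWithin_le'
    (fun x _ ↦ (hF x).hasFDerivWithinAt) (oscillation_le t) (Metric.mem_ball_self hδ) hyt
  exact this.trans <| mul_le_mul_of_nonneg_left ((y - h).norm_coe_le_norm t) hε.le

theorem contDiff_superposition_nat (n : ℕ) {F : C(E, G)} (hF : ContDiff ℝ n F) :
    ContDiff ℝ n fun y : C(K, E) ↦ F.comp y := by
  induction n generalizing G with
  | zero => exact contDiff_zero.2 F.continuous_postcomp
  | succ n ih =>
    obtain ⟨F', hF', hderiv⟩ := (contDiff_succ_iff_hasFDerivAt (n := n)).1 (by exact_mod_cast hF)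
    have := ih (F := ⟨F', hF'.continuous⟩) hF'
    exact_mod_cast (contDiff_succ_iff_hasFDerivAt (n := n)).2
      ⟨_, pointwiseApply.contDiff.comp this,
        hasFDerivAt_superposition (F' := ⟨F', hF'.continuous⟩) hderiv⟩

theorem contDiff_superposition {F : C(E, G)} (hF : ContDiff ℝ (⊤ : ℕ∞) F) :
    ContDiff ℝ (⊤ : ℕ∞) fun y : C(K, E) ↦ F.comp y :=
  contDiff_infty.2 fun n ↦ contDiff_superposition_nat n (contDiff_infty.1 hF n)

end Superposition

section Averaging
open MeasureTheory
open scoped unitInterval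

/-- The dilation `t ↦ r * t` of the unit interval, depending continuously on `r`. -/
def dilation : C(I, C(I, I)) :=
  (⟨fun p ↦ p.1 * p.2, by fun_prop⟩ : C(I × I, I)).curry

@[simp]
theorem dilation_apply (r t : I) : dilation r t = r * t := rfl

theorem integrable_rpow_unitInterval {κ : ℝ} (hκ : 0 < κ) :
    Integrable fun s : I ↦ (s : ℝ) ^ (κ - 1) := by
  have := intervalIntegral.intervalIntegrable_rpow' (a := 0) (b := 1) (r := κ - 1) (by linarith)
  rw [intervalIntegrable_iff_integrableOn_Icc_of_le zero_le_one] at this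
  exact (unitInterval.measurePreserving_coe.integrable_comp_emb
    unitInterval.measurableEmbedding_coe).2 this

theorem integral_unitInterval_eq (f : ℝ → ℝ) : ∫ s : I, f s = ∫ s in (0 : ℝ)..1, f s := by
  rw [intervalIntegral.integral_of_le zero_le_one, ← integral_Icc_eq_integral_Ioc]
  exact unitInterval.measurePreserving_coe.integral_comp unitInterval.measurableEmbedding_coe f

theorem integrable_rpow_smul_dilation {κ : ℝ} (hκ : 0 < κ) (h : C(I, ℝ)) :
    Integrable fun s : I ↦ (s : ℝ) ^ (κ - 1) • h.comp (dilation s) :=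
  (integrable_rpow_unitInterval hκ).smul_bdd ‖h‖
    (h.continuous_postcomp.comp dilation.continuous).aestronglyMeasurable
    (.of_forall fun _ ↦ (ContinuousMap.norm_le _ (norm_nonneg h)).2 fun _ ↦ h.norm_coe_le_norm _)

/-- The weighted average `h ↦ (t ↦ ∫ s in 0..1, s ^ (κ - 1) * h (s * t))`, which inverts the Euler
operator `u ↦ t u' + κ u`. -/
noncomputable def averaging {κ : ℝ} (hκ : 0 < κ) : C(I, ℝ) →L[ℝ] C(I, ℝ) :=
  LinearMap.mkContinuous
    { toFun := fun h ↦ ∫ s : I, (s : ℝ) ^ (κ - 1) • h.comp (dilation s)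
      map_add' := fun g h ↦ by
        rw [← integral_add (integrable_rpow_smul_dilation hκ g)
          (integrable_rpow_smul_dilation hκ h)]
        simp only [ContinuousMap.add_comp, smul_add]
      map_smul' := fun c h ↦ by
        rw [RingHom.id_apply, ← integral_smul]
        simp only [ContinuousMap.smul_comp, smul_comm c] }
    (∫ s : I, (s : ℝ) ^ (κ - 1)) fun h ↦ by
      rw [← integral_mul_const]
      refine norm_integral_le_of_norm_le ((integrable_rpow_unitInterval hκ).mul_const _)
        (.of_forall fun s ↦ ?_)
      rw [norm_smul, Real.norm_of_nonneg (Real.rpow_nonneg s.2.1 _)]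
      exact mul_le_mul_of_nonneg_left ((ContinuousMap.norm_le _ (norm_nonneg h)).2
        fun t ↦ h.norm_coe_le_norm _) (Real.rpow_nonneg s.2.1 _)

theorem averaging_apply {κ : ℝ} (hκ : 0 < κ) (h : C(I, ℝ)) (t : I) :
    averaging hκ h t = ∫ s : I, (s : ℝ) ^ (κ - 1) * h (s * t) :=
  ContinuousMap.integral_apply (integrable_rpow_smul_dilation hκ h) t

theorem averaging_comp_dilation {κ : ℝ} (hκ : 0 < κ) (h : C(I, ℝ)) (r : I) :
    averaging hκ (h.comp (dilation r)) = (averaging hκ h).comp (dilation r) := by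
  ext t
  simp only [averaging_apply, ContinuousMap.comp_apply, dilation_apply, mul_left_comm r]

end Averaging

section BriotBouquet
open scoped unitInterval

/-- The curve `t ↦ (e * t, A h t)` over the unit interval, `A` being the averaging operator. -/
noncomputable def averagedCurve {κ : ℝ} (hκ : 0 < κ) : ℝ × C(I, ℝ) →L[ℝ] C(I, ℝ × ℝ) :=
  ((ContinuousLinearMap.inl ℝ ℝ ℝ).compLeftContinuous ℝ I ∘L
      .toSpanSingleton ℝ (⟨fun t ↦ t, by fun_prop⟩ : C(I, ℝ))).coprod
    ((ContinuousLinearMap.inr ℝ ℝ ℝ).compLeftContinuous ℝ I ∘L averaging hκ)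

@[simp]
theorem averagedCurve_apply {κ : ℝ} (hκ : 0 < κ) (e : ℝ) (h : C(I, ℝ)) (t : I) :
    averagedCurve hκ (e, h) t = (e * t, averaging hκ h t) := by
  simp [averagedCurve]

/-- The residual of `z * Q (z, u) * u' = P (z, u)` for `u (e * t) = A h t`; since `A` inverts the
Euler operator, `z * u'` becomes `h - κ * A h`. -/
noncomputable def briotBouquetResidual {κ : ℝ} (hκ : 0 < κ) (P Q : C(ℝ × ℝ, ℝ))
    (x : ℝ × C(I, ℝ)) : C(I, ℝ) :=
  Q.comp (averagedCurve hκ x) * (x.2 - κ • averaging hκ x.2) - P.comp (averagedCurve hκ x)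

variable {κ : ℝ} (hκ : 0 < κ) {P Q : C(ℝ × ℝ, ℝ)}

theorem briotBouquetResidual_apply (e : ℝ) (h : C(I, ℝ)) (t : I) :
    briotBouquetResidual hκ P Q (e, h) t =
      Q (e * t, averaging hκ h t) * (h t - κ * averaging hκ h t) - P (e * t, averaging hκ h t) := by
  simp [briotBouquetResidual]

theorem briotBouquetResidual_dilation (e : ℝ) (h : C(I, ℝ)) (r : I) :
    briotBouquetResidual hκ P Q (r * e, h.comp (dilation r)) =
      (briotBouquetResidual hκ P Q (e, h)).comp (dilation r) := by
  ext t
  simp only [briotBouquetResidual_apply, averaging_comp_dilation, ContinuousMap.comp_apply,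
    dilation_apply, Set.Icc.coe_mul]
  rw [show (r : ℝ) * e * t = e * (r * t) by ring]

theorem contDiff_briotBouquetResidual (hP : ContDiff ℝ (⊤ : ℕ∞) P) (hQ : ContDiff ℝ (⊤ : ℕ∞) Q) :
    ContDiff ℝ (⊤ : ℕ∞) (briotBouquetResidual hκ P Q) := by
  have hcurve : ContDiff ℝ (⊤ : ℕ∞) (averagedCurve hκ) := (averagedCurve hκ).contDiff
  have hPc := (contDiff_superposition (K := I) hP).comp hcurve
  have hQc := (contDiff_superposition (K := I) hQ).comp hcurve
  exact (hQc.mul (by fun_prop)).sub hPc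

theorem fderiv_briotBouquetResidual_comp_inr {α : ℝ} (hP : ContDiff ℝ (⊤ : ℕ∞) P)
    (hQ : ContDiff ℝ (⊤ : ℕ∞) Q) (hQ0 : Q 0 = 1)
    (hP' : HasFDerivAt P (α • .fst ℝ ℝ ℝ - κ • .snd ℝ ℝ ℝ) 0) :
    fderiv ℝ (briotBouquetResidual hκ P Q) 0 ∘L .inr ℝ ℝ C(I, ℝ) = .id ℝ C(I, ℝ) := by
  let P' : C(ℝ × ℝ, ℝ × ℝ →L[ℝ] ℝ) := ⟨fderiv ℝ P, hP.continuous_fderiv (by simp)⟩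
  have hPd : HasFDerivAt (fun x ↦ P.comp (averagedCurve hκ x))
      (pointwiseApply (P'.comp (averagedCurve hκ 0)) ∘L averagedCurve hκ) 0 :=
    HasFDerivAt.comp (g := fun y : C(I, ℝ × ℝ) ↦ P.comp y) 0
      (hasFDerivAt_superposition (F' := P')
        (fun x ↦ (hP.differentiable (by simp) x).hasFDerivAt) _)
      (averagedCurve hκ).hasFDerivAt
  have hQd : DifferentiableAt ℝ (fun x ↦ Q.comp (averagedCurve hκ x)) 0 :=
    (((contDiff_superposition (K := I) hQ).comp (averagedCurve hκ).contDiff).differentiable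
      (by simp)).differentiableAt
  let L : ℝ × C(I, ℝ) →L[ℝ] C(I, ℝ) :=
    .snd ℝ ℝ C(I, ℝ) - κ • (averaging hκ ∘L .snd ℝ ℝ C(I, ℝ))
  have hfd := ((hQd.hasFDerivAt.mul' L.hasFDerivAt).sub hPd).fderiv
  change fderiv ℝ (briotBouquetResidual hκ P Q) 0 = _ at hfd
  ext h t
  simp [hfd, L, P', hQ0, hP'.fderiv]

theorem norm_comp_dilation_le (h : C(I, ℝ)) (r : I) : ‖h.comp (dilation r)‖ ≤ ‖h‖ :=
  (ContinuousMap.norm_le _ (norm_nonneg h)).2 fun _ ↦ h.norm_coe_le_norm _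

theorem exists_selfSimilar_zero_briotBouquetResidual {α : ℝ} (hP : ContDiff ℝ (⊤ : ℕ∞) P)
    (hQ : ContDiff ℝ (⊤ : ℕ∞) Q) (hP0 : P 0 = 0) (hQ0 : Q 0 = 1)
    (hP' : HasFDerivAt P (α • .fst ℝ ℝ ℝ - κ • .snd ℝ ℝ ℝ) 0) :
    ∃ ψ : ℝ → C(I, ℝ), ContDiffAt ℝ (⊤ : ℕ∞) ψ 0 ∧ ψ 0 = 0 ∧
      ∀ᶠ e in 𝓝 0, briotBouquetResidual hκ P Q (e, ψ e) = 0 ∧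
        ∀ r : I, ψ (r * e) = (ψ e).comp (dilation r) := by
  have hΦ : ContDiffAt ℝ (⊤ : ℕ∞) (briotBouquetResidual hκ P Q) 0 :=
    (contDiff_briotBouquetResidual hκ hP hQ).contDiffAt
  have hΦ0 : briotBouquetResidual hκ P Q 0 = 0 := by
    ext t; simp [briotBouquetResidual, hP0]
  have hinv : (fderiv ℝ (briotBouquetResidual hκ P Q) 0 ∘L .inr ℝ ℝ C(I, ℝ)).IsInvertible := by
    rw [fderiv_briotBouquetResidual_comp_inr hκ hP hQ hQ0 hP']
    exact ⟨.refl ℝ _, rfl⟩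
  let ψ := hΦ.implicitFunction (by simp) hinv
  have hψ : ContDiffAt ℝ (⊤ : ℕ∞) ψ 0 := hΦ.contDiffAt_implicitFunction (by simp) hinv
  have hψ0 : ψ 0 = 0 := hΦ.implicitFunction_apply_self (by simp) hinv
  have hzero : ∀ᶠ e in 𝓝 0, briotBouquetResidual hκ P Q (e, ψ e) = 0 := by
    rw [← hΦ0]
    exact hΦ.eventually_apply_implicitFunction (by simp) hinv
  obtain ⟨δ, hδ, huniq⟩ := Metric.eventually_nhds_iff.1
    (hΦ.eventually_apply_eq_iff_implicitFunction (by simp) hinv)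
  have hsmall : ∀ᶠ e in 𝓝 0, dist (e, ψ e) 0 < δ := by
    have : Tendsto (fun e ↦ (e, ψ e)) (𝓝 0) (𝓝 (0, ψ 0)) :=
      (continuousAt_id.prodMk hψ.continuousAt).tendsto
    rw [hψ0] at this
    exact this.eventually (Metric.ball_mem_nhds _ hδ)
  refine ⟨ψ, hψ, hψ0, ?_⟩
  filter_upwards [hzero, hsmall] with e he hedist
  refine ⟨he, fun r ↦ (huniq (y := (r * e, (ψ e).comp (dilation r))) ?_).1 ?_⟩
  · rw [dist_zero_right, Prod.norm_def, max_lt_iff] at hedist ⊢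
    refine ⟨?_, (norm_comp_dilation_le _ r).trans_lt hedist.2⟩
    rw [norm_mul, Real.norm_of_nonneg r.2.1]
    exact (mul_le_of_le_one_left (norm_nonneg e) r.2.2).trans_lt hedist.1
  · rw [briotBouquetResidual_dilation, he, hΦ0, ContinuousMap.zero_comp]

theorem rpow_mul_averaging_eq_integral {h : C(I, ℝ)} {H : ℝ → ℝ} {e : ℝ} (he : 0 < e)
    (hH : ∀ s : I, h s = H (s * e)) :
    e ^ κ * averaging hκ h 1 = ∫ x in (0 : ℝ)..e, x ^ (κ - 1) * H x := by
  have hsubst := intervalIntegral.smul_integral_comp_mul_left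
    (fun x ↦ x ^ (κ - 1) * H x) e (a := 0) (b := 1)
  rw [mul_zero, mul_one, ← integral_unitInterval_eq, smul_eq_mul] at hsubst
  rw [← hsubst, averaging_apply, ← MeasureTheory.integral_const_mul,
    ← MeasureTheory.integral_const_mul]
  refine MeasureTheory.integral_congr_ae (.of_forall fun s ↦ ?_)
  simp only [mul_one, hH]
  rw [Real.mul_rpow he.le s.2.1, mul_comm e s, Real.rpow_sub_one he.ne']
  field_simp

theorem euler_of_rpow_mul_eq_integral (hκ : 0 < κ) {u H : ℝ → ℝ} {δ e : ℝ}
    (he : e ∈ Ioo 0 δ) (hH : ContinuousOn H (Ico 0 δ)) (hu : DifferentiableAt ℝ u e)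
    (hint : ∀ z ∈ Ioo 0 δ, z ^ κ * u z = ∫ x in (0 : ℝ)..z, x ^ (κ - 1) * H x) :
    e * deriv u e + κ * u e = H e := by
  have hcont : ContinuousOn (fun x ↦ x ^ (κ - 1) * H x) (Ioo 0 δ) :=
    (continuousOn_id.rpow_const fun x hx ↦ .inl hx.1.ne').mul (hH.mono Ioo_subset_Ico_self)
  have hintegrable : IntervalIntegrable (fun x ↦ x ^ (κ - 1) * H x) MeasureTheory.volume 0 e :=
    (intervalIntegral.intervalIntegrable_rpow' (by linarith)).mul_continuousOn <|
      hH.mono <| uIcc_of_le he.1.le ▸ Icc_subset_Ico_right he.2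
  have hleft : HasDerivAt (fun z ↦ z ^ κ * u z)
      (κ * e ^ (κ - 1) * u e + e ^ κ * deriv u e) e :=
    (Real.hasDerivAt_rpow_const (.inl he.1.ne')).mul hu.hasDerivAt
  have hright : HasDerivAt (fun z ↦ z ^ κ * u z) (e ^ (κ - 1) * H e) e :=
    (intervalIntegral.integral_hasDerivAt_right hintegrable
      (hcont.stronglyMeasurableAtFilter isOpen_Ioo e he)
      (hcont.continuousAt (isOpen_Ioo.mem_nhds he))).congr_of_eventuallyEq <|
      eventually_of_mem (isOpen_Ioo.mem_nhds he) hint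
  refine mul_left_cancel₀ (Real.rpow_pos_of_pos he.1 (κ - 1)).ne' ?_
  have hpow : e ^ (κ - 1) * e = e ^ κ := by
    rw [← Real.rpow_add_one he.1.ne', sub_add_cancel]
  linear_combination hleft.unique hright + deriv u e * hpow

theorem eventually_euler_averaging {ψ : ℝ → C(I, ℝ)} (hψ : ContDiffAt ℝ 1 ψ 0)
    (hsim : ∀ᶠ e in 𝓝 0, ∀ r : I, ψ (r * e) = (ψ e).comp (dilation r)) :
    ∀ᶠ e in 𝓝[>] 0,
      e * deriv (fun z ↦ averaging hκ (ψ z) 1) e + κ * averaging hκ (ψ e) 1 = ψ e 1 := by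
  have hdiff : ∀ᶠ e in 𝓝 0, DifferentiableAt ℝ ψ e :=
    (hψ.eventually (by simp)).mono fun e he ↦ he.differentiableAt (by simp)
  obtain ⟨δ, hδ, hball⟩ := Metric.eventually_nhds_iff_ball.1 (hsim.and hdiff)
  have hIco {z : ℝ} (hz : z ∈ Ico 0 δ) : z ∈ Metric.ball 0 δ := by
    simpa [abs_of_nonneg hz.1] using hz.2
  filter_upwards [Ioo_mem_nhdsGT hδ] with e he
  refine euler_of_rpow_mul_eq_integral (H := fun z ↦ ψ z 1) hκ he (fun z hz ↦ ?_) ?_ fun z hz ↦ ?_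
  · exact ((ContinuousMap.evalCLM ℝ (1 : I)).continuous.continuousAt.comp
      (hball z (hIco hz)).2.continuousAt).continuousWithinAt
  · exact (ContinuousMap.evalCLM ℝ (1 : I) ∘L averaging hκ).differentiableAt.comp e
      (hball e (hIco (Ioo_subset_Ico_self he))).2
  · refine rpow_mul_averaging_eq_integral hκ hz.1 fun s ↦ ?_
    simp [(hball z (hIco (Ioo_subset_Ico_self hz))).1 s]

theorem tendsto_briotBouquet_slope {α κ u' : ℝ} {P : ℝ × ℝ → ℝ} {u : ℝ → ℝ} (hP0 : P 0 = 0)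
    (hP' : HasFDerivAt P (α • .fst ℝ ℝ ℝ - κ • .snd ℝ ℝ ℝ) 0) (hu : HasDerivAt u u' 0)
    (hu0 : u 0 = 0) : Tendsto (fun z ↦ P (z, u z) / z) (𝓝[>] 0) (𝓝 (α - κ * u')) := by
  have hbase : ((0 : ℝ), u 0) = 0 := by rw [hu0, Prod.mk_zero_zero]
  have hgraph : HasDerivAt (fun z ↦ P (z, u z)) (α - κ * u') 0 := by
    rw [← hbase] at hP'
    simpa [Function.comp_def] using hP'.comp_hasDerivAt (0 : ℝ) ((hasDerivAt_id 0).prodMk hu)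
  refine hgraph.tendsto_slope_zero_right.congr fun z ↦ ?_
  rw [hbase, hP0, zero_add, sub_zero, smul_eq_mul, inv_mul_eq_div]

theorem deriv_zero_of_briotBouquet {κ α : ℝ} (hκ : 0 < κ) {P Q : ℝ × ℝ → ℝ} {u : ℝ → ℝ}
    (hQ : ContinuousAt Q 0) (hP0 : P 0 = 0) (hQ0 : Q 0 = 1)
    (hP' : HasFDerivAt P (α • .fst ℝ ℝ ℝ - κ • .snd ℝ ℝ ℝ) 0) (hu : ContDiffAt ℝ 1 u 0)
    (hu0 : u 0 = 0) (hode : ∀ᶠ z in 𝓝[>] 0, z * Q (z, u z) * deriv u z = P (z, u z)) :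
    deriv u 0 = α / (κ + 1) := by
  have hslope := tendsto_briotBouquet_slope hP0 hP'
    (hu.differentiableAt (by simp)).hasDerivAt hu0
  have hQlim : Tendsto (fun z ↦ Q (z, u z)) (𝓝 0) (𝓝 1) := by
    rw [← hQ0]
    have hgraph : ContinuousAt (fun z ↦ (z, u z)) 0 := continuousAt_id.prodMk hu.continuousAt
    exact hQ.tendsto.comp (by simpa only [ContinuousAt, hu0, Prod.mk_zero_zero] using hgraph)
  have hderiv : Tendsto (deriv u) (𝓝 0) (𝓝 (deriv u 0)) :=
    ((hu.continuousAt_fderiv (by simp)).clm_apply continuousAt_const).tendsto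
  have hmul : Tendsto (fun z ↦ P (z, u z) / z) (𝓝[>] 0) (𝓝 (1 * deriv u 0)) := by
    refine ((hQlim.mul hderiv).mono_left nhdsWithin_le_nhds).congr' ?_
    filter_upwards [hode, self_mem_nhdsWithin] with z hz hz0
    rw [← hz, mul_assoc, mul_div_cancel_left₀ _ (ne_of_gt hz0)]
  rw [eq_div_iff (by positivity)]
  linear_combination - tendsto_nhds_unique hslope hmul

theorem exists_briotBouquet_solution {κ α : ℝ} (hκ : 0 < κ) {P Q : ℝ × ℝ → ℝ}
    (hP : ContDiff ℝ (⊤ : ℕ∞) P) (hQ : ContDiff ℝ (⊤ : ℕ∞) Q) (hP0 : P 0 = 0) (hQ0 : Q 0 = 1)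
    (hP' : HasFDerivAt P (α • .fst ℝ ℝ ℝ - κ • .snd ℝ ℝ ℝ) 0) :
    ∃ u : ℝ → ℝ, ContDiffAt ℝ (⊤ : ℕ∞) u 0 ∧ u 0 = 0 ∧
      ∀ᶠ z in 𝓝[>] 0, z * Q (z, u z) * deriv u z = P (z, u z) := by
  obtain ⟨ψ, hψ, hψ0, hzero⟩ := exists_selfSimilar_zero_briotBouquetResidual hκ
    (P := ⟨P, hP.continuous⟩) (Q := ⟨Q, hQ.continuous⟩) hP hQ hP0 hQ0 hP'
  refine ⟨fun z ↦ averaging hκ (ψ z) 1,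
    (ContinuousMap.evalCLM ℝ (1 : I) ∘L averaging hκ).contDiff.contDiffAt.comp 0 hψ,
    by simp [hψ0], ?_⟩
  filter_upwards [eventually_euler_averaging hκ (hψ.of_le (by simp)) (hzero.mono fun _ h ↦ h.2),
    nhdsWithin_le_nhds (hzero.mono fun _ h ↦ h.1)] with z hz hres
  have := DFunLike.congr_fun hres 1
  simp only [briotBouquetResidual_apply, ← hz, Set.Icc.coe_one, mul_one, ContinuousMap.coe_mk,
    ContinuousMap.zero_apply] at this
  linear_combination this

theorem eventually_ode_difference_mul_nonpos {α κ : ℝ} (hκ : 0 < κ) {P Q : ℝ × ℝ → ℝ}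
    {p q : ℝ → ℝ} (hP : ContDiffAt ℝ 1 P 0) (hQ : ContDiffAt ℝ 1 Q 0) (hP0 : P 0 = 0)
    (hQ0 : Q 0 = 1) (hP' : HasFDerivAt P (α • .fst ℝ ℝ ℝ - κ • .snd ℝ ℝ ℝ) 0)
    (hp : Tendsto p (𝓝[>] 0) (𝓝 0)) (hq : Tendsto q (𝓝[>] 0) (𝓝 0)) :
    ∀ᶠ z in 𝓝[>] 0, (P (z, p z) / Q (z, p z) - P (z, q z) / Q (z, q z)) * (p z - q z) ≤ 0 := by
  have hderiv : HasFDerivAt (P / Q) (α • .fst ℝ ℝ ℝ - κ • .snd ℝ ℝ ℝ) 0 := by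
    have hinv := (hQ.inv (by simp [hQ0])).differentiableAt (by simp)
    rw [div_eq_mul_inv]
    exact (hP'.mul hinv.hasFDerivAt).congr_fderiv (by simp [hP0, hQ0])
  have hstrict : HasStrictFDerivAt (P / Q) (α • .fst ℝ ℝ ℝ - κ • .snd ℝ ℝ ℝ) 0 := by
    have := (hP.div hQ (by simp [hQ0])).hasStrictFDerivAt (by simp)
    rwa [hderiv.fderiv] at this
  have hid : Tendsto (fun z : ℝ ↦ z) (𝓝[>] 0) (𝓝 0) := nhdsWithin_le_nhds
  filter_upwards [((hid.prodMk_nhds hp).prodMk_nhds (hid.prodMk_nhds hq)).eventually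
    (hstrict.isLittleO.bound hκ)] with z hz
  have hbound : ‖P (z, p z) / Q (z, p z) - P (z, q z) / Q (z, q z) + κ * (p z - q z)‖ ≤
      κ * ‖p z - q z‖ := by simpa using hz
  have hmul := (le_abs_self _).trans <| (abs_mul _ (p z - q z)).trans_le <|
    mul_le_mul_of_nonneg_right hbound (abs_nonneg (p z - q z))
  rw [Real.norm_eq_abs, mul_assoc, abs_mul_abs_self] at hmul
  linarith

theorem eventuallyEq_of_briotBouquet {α κ : ℝ} (hκ : 0 < κ) {P Q : ℝ × ℝ → ℝ}
    {p q : ℝ → ℝ} (hP : ContDiffAt ℝ 1 P 0) (hQ : ContDiffAt ℝ 1 Q 0) (hP0 : P 0 = 0)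
    (hQ0 : Q 0 = 1) (hP' : HasFDerivAt P (α • .fst ℝ ℝ ℝ - κ • .snd ℝ ℝ ℝ) 0)
    (hp : Tendsto p (𝓝[>] 0) (𝓝 0)) (hq : Tendsto q (𝓝[>] 0) (𝓝 0))
    (hpode : ∀ᶠ z in 𝓝[>] 0, HasDerivAt p (P (z, p z) / (z * Q (z, p z))) z)
    (hqode : ∀ᶠ z in 𝓝[>] 0, HasDerivAt q (P (z, q z) / (z * Q (z, q z))) z) :
    p =ᶠ[𝓝[>] 0] q := by
  obtain ⟨δ, hδ : 0 < δ, h⟩ := mem_nhdsGT_iff_exists_Ioo_subset.1 <| (hpode.and hqode).and <|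
    eventually_ode_difference_mul_nonpos hκ hP hQ hP0 hQ0 hP' hp hq
  have hsq (z : ℝ) (hz : z ∈ Ioo 0 δ) := ((h hz).1.1.sub (h hz).1.2).pow 2
  have hanti : AntitoneOn (fun z ↦ (p z - q z) ^ 2) (Ioo 0 δ) := by
    refine antitoneOn_of_hasDerivWithinAt_nonpos (convex_Ioo _ _)
      (fun z hz ↦ (hsq z hz).continuousAt.continuousWithinAt)
      (fun z hz ↦ (hsq z (interior_subset hz)).hasDerivWithinAt) fun z hz ↦ ?_
    have hz := interior_subset hz
    have hmul := div_nonpos_of_nonpos_of_nonneg (h hz).2 hz.1.le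
    refine le_of_eq_of_le ?_ (mul_nonpos_of_nonneg_of_nonpos zero_le_two hmul)
    simp only [Nat.cast_ofNat, Pi.sub_apply, Nat.add_one_sub_one, pow_one, div_mul_eq_div_div_swap]
    ring
  have hlim : Tendsto (fun z ↦ (p z - q z) ^ 2) (𝓝[>] 0) (𝓝 0) := by
    simpa using (hp.sub hq).pow 2
  filter_upwards [Ioo_mem_nhdsGT hδ] with z hz
  have hle : (p z - q z) ^ 2 ≤ 0 := ge_of_tendsto hlim <|
    eventually_of_mem (Ioo_mem_nhdsGT hz.1) fun x hx ↦ hanti ⟨hx.1, hx.2.trans hz.2⟩ hz hx.2.le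
  exact sub_eq_zero.1 (pow_eq_zero_iff two_ne_zero |>.1 (hle.antisymm (sq_nonneg _)))

end BriotBouquet

section ScalarODE

/-- `v` solves the scalar equation `x' = F (t, x)` on `s`, with one-sided derivatives at boundary
points of `s`, and its graph over `s` stays in the domain `U` of the field. -/
structure IsSolutionOn (F : ℝ × ℝ → ℝ) (U : Set (ℝ × ℝ)) (v : ℝ → ℝ) (s : Set ℝ) : Prop where
  graph_mem : ∀ t ∈ s, (t, v t) ∈ U
  hasDerivWithinAt : ∀ t ∈ s, HasDerivWithinAt v (F (t, v t)) s t

variable {F : ℝ × ℝ → ℝ} {U : Set (ℝ × ℝ)} {s : Set ℝ} {v p q lo hi : ℝ → ℝ} {a b : ℝ}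

theorem IsSolutionOn.continuousOn (h : IsSolutionOn F U v s) : ContinuousOn v s :=
  fun t ht ↦ (h.hasDerivWithinAt t ht).continuousWithinAt

theorem IsSolutionOn.mono {s' : Set ℝ} (h : IsSolutionOn F U v s) (hs : s' ⊆ s) :
    IsSolutionOn F U v s' :=
  ⟨fun t ht ↦ h.graph_mem t (hs ht), fun t ht ↦ (h.hasDerivWithinAt t (hs ht)).mono hs⟩

theorem IsSolutionOn.congr (h : IsSolutionOn F U v s) (hp : EqOn p v s) : IsSolutionOn F U p s :=
  ⟨fun t ht ↦ hp ht ▸ h.graph_mem t ht,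
    fun t ht ↦ hp ht ▸ (h.hasDerivWithinAt t ht).congr hp (hp ht)⟩

theorem IsSolutionOn.of_forall_mem_nhds
    (h : ∀ t ∈ s, ∃ s' ∈ 𝓝 t, IsSolutionOn F U v s') : IsSolutionOn F U v s := by
  constructor <;> intro t ht <;> obtain ⟨s', hs', h'⟩ := h t ht
  · exact h'.graph_mem t (mem_of_mem_nhds hs')
  · exact ((h'.hasDerivWithinAt t (mem_of_mem_nhds hs')).hasDerivAt hs').hasDerivWithinAt

theorem IsSolutionOn.hasDerivAt (h : IsSolutionOn F U v s) (hs : IsOpen s) {t : ℝ} (ht : t ∈ s) :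
    HasDerivAt v (F (t, v t)) t :=
  (h.hasDerivWithinAt t ht).hasDerivAt (hs.mem_nhds ht)

theorem IsSolutionOn.hasDerivWithinAt_Ici (h : IsSolutionOn F U v (Icc a b)) {t : ℝ}
    (ht : t ∈ Ico a b) : HasDerivWithinAt v (F (t, v t)) (Ici t) t :=
  (h.hasDerivWithinAt t (Ico_subset_Icc_self ht)).mono_of_mem_nhdsWithin <|
    mem_of_superset (Icc_mem_nhdsGE ht.2) (Icc_subset_Icc_left ht.1)

theorem IsSolutionOn.contDiffOn (h : IsSolutionOn F U v s) (hs : IsOpen s)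
    (hF : ContDiffOn ℝ (⊤ : ℕ∞) F U) : ContDiffOn ℝ (⊤ : ℕ∞) v s := by
  refine contDiffOn_infty.2 fun n ↦ ?_
  induction n with
  | zero => exact contDiffOn_zero.2 h.continuousOn
  | succ n ih =>
    push_cast
    refine (contDiffOn_succ_iff_deriv_of_isOpen hs).2
      ⟨fun t ht ↦ (h.hasDerivAt hs ht).differentiableAt.differentiableWithinAt, by simp, ?_⟩
    have hgraph : ContDiffOn ℝ n (fun t ↦ F (t, v t)) s :=
      (contDiffOn_infty.1 hF n).comp (contDiffOn_id.prodMk ih) h.graph_mem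
    exact hgraph.congr fun t ht ↦ (h.hasDerivAt hs ht).deriv

theorem IsSolutionOn.exists_eqOn_Icc (hp : IsSolutionOn F U p (Icc a b))
    (hq : IsSolutionOn F U q (Icc a b)) (hU : IsOpen U) (hF : ContDiffOn ℝ 1 F U)
    (hpq : p a = q a) (hab : a < b) : ∃ d ∈ Ioc a b, EqOn p q (Icc a d) := by
  have ha : a ∈ Ico a b := left_mem_Ico.2 hab
  obtain ⟨K, N, hN, hLip⟩ := (hF.contDiffAt (hU.mem_nhds
    (hp.graph_mem a (Ico_subset_Icc_self ha)))).exists_lipschitzOnWith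
  have hnear {r : ℝ → ℝ} (hr : IsSolutionOn F U r (Icc a b)) (hra : r a = p a) :
      ∀ᶠ t in 𝓝[≥] a, (t, r t) ∈ N := by
    have := continuousWithinAt_id.prodMk (hr.hasDerivWithinAt_Ici ha).continuousWithinAt
    exact this (by simpa [hra] using hN)
  obtain ⟨z, hz, hzN⟩ := mem_nhdsGE_iff_exists_Icc_subset.1
    ((hnear hp rfl).and (hnear hq hpq.symm))
  have hsub : Ico a (min z b) ⊆ Ico a b := Ico_subset_Ico_right (min_le_right _ _)
  have hsubN : Ico a (min z b) ⊆ Icc a z :=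
    Ico_subset_Icc_self.trans (Icc_subset_Icc_right (min_le_left _ _))
  have hsubC : Icc a (min z b) ⊆ Icc a b := Icc_subset_Icc_right (min_le_right _ _)
  refine ⟨min z b, ⟨lt_min hz hab, min_le_right _ _⟩, ?_⟩
  exact ODE_solution_unique_of_mem_Icc_right (v := fun t x ↦ F (t, x))
    (s := fun t ↦ {x | (t, x) ∈ N}) (K := K)
    (fun t _ ↦ LipschitzOnWith.of_dist_le_mul fun x hx y hy ↦ by
      simpa [Prod.dist_eq] using hLip.dist_le_mul _ hx _ hy)
    (hp.continuousOn.mono hsubC) (fun t ht ↦ hp.hasDerivWithinAt_Ici (hsub ht))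
    (fun t ht ↦ (hzN (hsubN ht)).1)
    (hq.continuousOn.mono hsubC) (fun t ht ↦ hq.hasDerivWithinAt_Ici (hsub ht))
    (fun t ht ↦ (hzN (hsubN ht)).2) hpq

theorem IsSolutionOn.eqOn_Icc (hp : IsSolutionOn F U p (Icc a b))
    (hq : IsSolutionOn F U q (Icc a b)) (hU : IsOpen U) (hF : ContDiffOn ℝ 1 F U)
    (hpq : p a = q a) : EqOn p q (Icc a b) := by
  have hclosed : IsClosed ({t | p t = q t} ∩ Icc a b) := by
    rw [inter_comm]
    exact (hp.continuousOn.prodMk hq.continuousOn).preimage_isClosed_of_isClosed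
      isClosed_Icc isClosed_diagonal
  refine hclosed.Icc_subset_of_forall_exists_gt hpq fun t ⟨hpqt, ht⟩ y hy ↦ ?_
  have hsub : Icc t b ⊆ Icc a b := Icc_subset_Icc_left ht.1
  obtain ⟨d, hd, heq⟩ := (hp.mono hsub).exists_eqOn_Icc (hq.mono hsub) hU hF hpqt ht.2
  exact ⟨min d y, heq ⟨le_min hd.1.le (le_of_lt hy), min_le_left _ _⟩,
    lt_min hd.1 hy, min_le_right _ _⟩

/-- A strict subsolution `lo` and a strict supersolution `hi` of `x' = F (t, x)` over `s`, enclosing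
a region contained in the domain `U` of the field: solutions cannot leave this region forward in
time. -/
structure IsTrappingPair (F : ℝ × ℝ → ℝ) (U : Set (ℝ × ℝ)) (lo hi : ℝ → ℝ) (s : Set ℝ) :
    Prop where
  le : ∀ t ∈ s, lo t ≤ hi t
  region_subset : ∀ t ∈ s, ∀ x ∈ Icc (lo t) (hi t), (t, x) ∈ U
  differentiableAt_lower : ∀ t ∈ s, DifferentiableAt ℝ lo t
  differentiableAt_upper : ∀ t ∈ s, DifferentiableAt ℝ hi t
  deriv_lower_lt : ∀ t ∈ s, deriv lo t < F (t, lo t)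
  lt_deriv_upper : ∀ t ∈ s, F (t, hi t) < deriv hi t

theorem IsTrappingPair.mono {s' : Set ℝ} (h : IsTrappingPair F U lo hi s) (hs : s' ⊆ s) :
    IsTrappingPair F U lo hi s' :=
  ⟨fun t ht ↦ h.le t (hs ht), fun t ht ↦ h.region_subset t (hs ht),
    fun t ht ↦ h.differentiableAt_lower t (hs ht), fun t ht ↦ h.differentiableAt_upper t (hs ht),
    fun t ht ↦ h.deriv_lower_lt t (hs ht), fun t ht ↦ h.lt_deriv_upper t (hs ht)⟩

theorem IsTrappingPair.continuousOn_lower (h : IsTrappingPair F U lo hi s) : ContinuousOn lo s :=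
  fun t ht ↦ (h.differentiableAt_lower t ht).continuousAt.continuousWithinAt

theorem IsTrappingPair.continuousOn_upper (h : IsTrappingPair F U lo hi s) : ContinuousOn hi s :=
  fun t ht ↦ (h.differentiableAt_upper t ht).continuousAt.continuousWithinAt

theorem IsTrappingPair.exists_nnnorm_le {G : Type*} [SeminormedAddCommGroup G] {f : ℝ × ℝ → G}
    (h : IsTrappingPair F U lo hi (Icc a b)) (hf : ContinuousOn f U) :
    ∃ C : NNReal, ∀ t ∈ Icc a b, ∀ x ∈ Icc (lo t) (hi t), ‖f (t, x)‖₊ ≤ C := by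
  let φ : ℝ × ℝ → ℝ × ℝ := fun y ↦ (y.1, AffineMap.lineMap (lo y.1) (hi y.1) y.2)
  have hφ_mem : MapsTo φ (Icc a b ×ˢ Icc 0 1) U := fun y hy ↦
    h.region_subset _ hy.1 _ <| segment_eq_Icc (h.le _ hy.1) ▸
      segment_eq_image_lineMap ℝ (lo y.1) (hi y.1) ▸ mem_image_of_mem _ hy.2
  have hφ : ContinuousOn φ (Icc a b ×ˢ Icc 0 1) := by
    have hlo : ContinuousOn (fun y : ℝ × ℝ ↦ lo y.1) (Icc a b ×ˢ Icc 0 1) :=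
      h.continuousOn_lower.comp continuousOn_fst fun y hy ↦ hy.1
    have hhi : ContinuousOn (fun y : ℝ × ℝ ↦ hi y.1) (Icc a b ×ˢ Icc 0 1) :=
      h.continuousOn_upper.comp continuousOn_fst fun y hy ↦ hy.1
    simp only [φ, AffineMap.lineMap_apply_ring']
    exact continuousOn_fst.prodMk ((continuousOn_snd.mul (hhi.sub hlo)).add hlo)
  obtain ⟨C, hC⟩ := (isCompact_Icc.prod isCompact_Icc).exists_bound_of_continuousOn
    (hf.comp hφ hφ_mem)
  refine ⟨C.toNNReal, fun t ht x hx ↦ ?_⟩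
  rw [← segment_eq_Icc (hx.1.trans hx.2), segment_eq_image_lineMap] at hx
  obtain ⟨s, hs, rfl⟩ := hx
  exact NNReal.coe_le_coe.1 <| (hC (t, s) ⟨ht, hs⟩).trans (Real.le_coe_toNNReal C)

theorem IsTrappingPair.exists_lipschitzOnWith (h : IsTrappingPair F U lo hi (Icc a b))
    (hU : IsOpen U) (hF : ContDiffOn ℝ 1 F U) :
    ∃ K : NNReal, ∀ t ∈ Icc a b, LipschitzOnWith K (fun x ↦ F (t, x)) (Icc (lo t) (hi t)) := by
  obtain ⟨K, hK⟩ := h.exists_nnnorm_le (hF.continuousOn_fderiv_of_isOpen hU le_rfl)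
  refine ⟨K, fun t ht ↦ (convex_Icc _ _).lipschitzOnWith_of_nnnorm_hasDerivWithin_le
    (f' := fun x ↦ fderiv ℝ F (t, x) (0, 1)) (fun x hx ↦ ?_) fun x hx ↦ ?_⟩
  · have hd : HasFDerivAt F (fderiv ℝ F (t, x)) (t, x) :=
      ((hF.contDiffAt (hU.mem_nhds (h.region_subset t ht x hx))).differentiableAt
        (by simp)).hasFDerivAt
    exact (hd.comp_hasDerivAt x ((hasDerivAt_const x t).prodMk (hasDerivAt_id x))).hasDerivWithinAt
  · refine ((fderiv ℝ F (t, x)).le_opNNNorm _).trans ?_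
    simpa [Prod.nnnorm_def] using hK t ht x hx

/-- The value `x` moved to the nearest point of the interval `[l, u]`. -/
def clamp (l u x : ℝ) : ℝ := max l (min u x)

theorem clamp_mem_Icc {l u : ℝ} (hlu : l ≤ u) (x : ℝ) : clamp l u x ∈ Icc l u :=
  ⟨le_max_left _ _, max_le hlu (min_le_left _ _)⟩

theorem clamp_eq_self {l u x : ℝ} (hx : x ∈ Icc l u) : clamp l u x = x := by
  rw [clamp, min_eq_right hx.2, max_eq_right hx.1]

theorem lipschitzWith_clamp (l u : ℝ) : LipschitzWith 1 (clamp l u) :=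
  (LipschitzWith.id.const_min u).const_max l

theorem IsTrappingPair.exists_clamped_solution (h : IsTrappingPair F U lo hi (Icc a b))
    (hU : IsOpen U) (hF : ContDiffOn ℝ 1 F U) (hab : a ≤ b) (x₀ : ℝ) :
    ∃ w : ℝ → ℝ, w a = x₀ ∧ ∀ t ∈ Icc a b,
      HasDerivWithinAt w (F (t, clamp (lo t) (hi t) (w t))) (Icc a b) t := by
  obtain ⟨K, hK⟩ := h.exists_lipschitzOnWith hU hF
  obtain ⟨C, hC⟩ := h.exists_nnnorm_le hF.continuousOn
  have hclamp (t : ℝ) (ht : t ∈ Icc a b) (x : ℝ) := clamp_mem_Icc (h.le t ht) x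
  have hPL : IsPicardLindelof (fun t x ↦ F (t, clamp (lo t) (hi t) x))
      (⟨a, left_mem_Icc.2 hab⟩ : Icc a b) x₀ (C * (b - a).toNNReal) 0 C K := by
    refine ⟨fun t ht ↦ ?_, fun x _ ↦ ?_, fun t ht x _ ↦ hC t ht _ (hclamp t ht x), ?_⟩
    · have := (hK t ht).comp ((lipschitzWith_clamp (lo t) (hi t)).lipschitzOnWith (s := univ))
        fun x _ ↦ hclamp t ht x
      exact (mul_one K ▸ this).mono (subset_univ _)
    · refine hF.continuousOn.comp (continuousOn_id.prodMk ?_)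
        fun t ht ↦ h.region_subset t ht _ (hclamp t ht x)
      exact h.continuousOn_lower.sup (h.continuousOn_upper.inf continuousOn_const)
    · simp [Real.coe_toNNReal _ (sub_nonneg.2 hab), hab]
  exact hPL.exists_eq_forall_mem_Icc_hasDerivWithinAt₀

theorem IsTrappingPair.exists_isSolutionOn (h : IsTrappingPair F U lo hi (Icc a b))
    (hU : IsOpen U) (hF : ContDiffOn ℝ 1 F U) (hab : a ≤ b) {x₀ : ℝ}
    (hx₀ : x₀ ∈ Icc (lo a) (hi a)) :
    ∃ w : ℝ → ℝ, w a = x₀ ∧ IsSolutionOn F U w (Icc a b) ∧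
      ∀ t ∈ Icc a b, w t ∈ Icc (lo t) (hi t) := by
  obtain ⟨w, rfl, hw⟩ := h.exists_clamped_solution hU hF hab x₀
  have hwc : ContinuousOn w (Icc a b) := fun t ht ↦ (hw t ht).continuousWithinAt
  have hw' (t : ℝ) (ht : t ∈ Ico a b) :
      HasDerivWithinAt w (F (t, clamp (lo t) (hi t) (w t))) (Ici t) t :=
    (hw t (Ico_subset_Icc_self ht)).mono_of_mem_nhdsWithin <|
      mem_of_superset (Icc_mem_nhdsGE ht.2) (Icc_subset_Icc_left ht.1)
  have hupper := image_le_of_deriv_right_lt_deriv_boundary' hwc hw' hx₀.2 h.continuousOn_upper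
    (fun t ht ↦ (h.differentiableAt_upper t (Ico_subset_Icc_self ht)).hasDerivAt.hasDerivWithinAt)
    fun t ht heq ↦ by
      have ht' := Ico_subset_Icc_self ht
      rw [heq, clamp_eq_self (right_mem_Icc.2 (h.le t ht'))]
      exact h.lt_deriv_upper t ht'
  have hlower := image_le_of_deriv_right_lt_deriv_boundary' h.continuousOn_lower
    (fun t ht ↦ (h.differentiableAt_lower t (Ico_subset_Icc_self ht)).hasDerivAt.hasDerivWithinAt)
    hx₀.1 hwc hw' fun t ht heq ↦ by
      have ht' := Ico_subset_Icc_self ht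
      rw [← heq, clamp_eq_self (left_mem_Icc.2 (h.le t ht'))]
      exact h.deriv_lower_lt t ht'
  have hmem (t : ℝ) (ht : t ∈ Icc a b) : w t ∈ Icc (lo t) (hi t) := ⟨hlower ht, hupper ht⟩
  refine ⟨w, rfl, ⟨fun t ht ↦ h.region_subset t ht _ (hmem t ht), fun t ht ↦ ?_⟩, hmem⟩
  simpa only [clamp_eq_self (hmem t ht)] using hw t ht

theorem IsSolutionOn.exists_extension {u : ℝ → ℝ} {t₀ t₁ c : ℝ} (hu : IsSolutionOn F U u (Ioo a t₁))
    (hU : IsOpen U) (hF : ContDiffOn ℝ 1 F U) (ht₀ : t₀ ∈ Ioo a t₁) (ht₁ : t₁ ≤ c)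
    (h : IsTrappingPair F U lo hi (Ico t₀ c)) (hut₀ : u t₀ ∈ Icc (lo t₀) (hi t₀)) :
    ∃ v : ℝ → ℝ, EqOn v u (Iic t₀) ∧ IsSolutionOn F U v (Ioo a c) ∧
      ∀ t ∈ Ico t₀ c, v t ∈ Icc (lo t) (hi t) := by
  have hsol (b : ℝ) (hb : b ∈ Ico t₀ c) := (h.mono (Icc_subset_Ico_right hb.2)).exists_isSolutionOn
    hU hF hb.1 hut₀
  choose! w hw₀ hw hwmem using hsol
  let v : ℝ → ℝ := fun t ↦ if t ≤ t₀ then u t else w ((t + c) / 2) t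
  have hvw (b : ℝ) (hb : b ∈ Ico t₀ c) : EqOn v (w b) (Icc t₀ b) := by
    intro t ht
    rcases ht.1.eq_or_lt with rfl | hlt
    · simp [v, hw₀ b hb]
    have hmid : (t + c) / 2 ∈ Ico t₀ c := ⟨by linarith [hb.2, ht.2], by linarith [hb.2, ht.2]⟩
    have htmid : t ≤ (t + c) / 2 := by linarith [hb.2, ht.2]
    have heq := ((hw _ hmid).mono (Icc_subset_Icc_right htmid)).eqOn_Icc
      ((hw b hb).mono (Icc_subset_Icc_right ht.2)) hU hF ((hw₀ _ hmid).trans (hw₀ b hb).symm)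
    simpa [v, hlt.not_ge] using heq ⟨ht.1, le_rfl⟩
  have hvu : EqOn v u (Ioo a t₁) := by
    intro t ht
    rcases le_or_gt t t₀ with hle | hgt
    · simp [v, hle]
    have htc : t ∈ Ico t₀ c := ⟨hgt.le, ht.2.trans_le ht₁⟩
    rw [hvw t htc ⟨hgt.le, le_rfl⟩]
    exact (hw t htc).eqOn_Icc (hu.mono fun x hx ↦ ⟨ht₀.1.trans_le hx.1, hx.2.trans_lt ht.2⟩) hU hF
      (hw₀ t htc) ⟨hgt.le, le_rfl⟩
  refine ⟨v, fun t ht ↦ by simp [v, mem_Iic.1 ht], .of_forall_mem_nhds fun t ht ↦ ?_, fun t ht ↦ ?_⟩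
  · rcases lt_or_ge t t₁ with hlt | hge
    · exact ⟨_, Ioo_mem_nhds ht.1 hlt, hu.congr hvu⟩
    · obtain ⟨b, htb, hbc⟩ := exists_between ht.2
      have hb : b ∈ Ico t₀ c := ⟨(ht₀.2.trans_le hge).le.trans htb.le, hbc⟩
      exact ⟨_, Icc_mem_nhds (ht₀.2.trans_le hge) htb, (hw b hb).congr (hvw b hb)⟩
  · rw [hvw t ht ⟨ht.1, le_rfl⟩]
    exact hwmem t ht t ⟨ht.1, le_rfl⟩

end ScalarODE

section SelfSimilarEuler

/-- The factor of `Deltav` complementary to `1 - v ^ 2`. -/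
noncomputable def reducedDeltav (m κ Z v : ℝ) : ℝ :=
  m * (1 - v ^ 2) * Z - κ * v * (1 - v * Z)

/-- The factor of `DeltaZ` complementary to `Z`. -/
noncomputable def reducedDeltaZ (ℓ Z v : ℝ) : ℝ :=
  (1 - Z * v) ^ 2 - ℓ * (v - Z) ^ 2

/-- The linear factor of `reducedDeltaZ (a ^ 2)` that vanishes on the sonic curve through the point
`P₁ = (Z₁, v₁)`; the other linear factor is `sonicGap (-a)`. -/
noncomputable def sonicGap (a Z v : ℝ) : ℝ :=
  1 - Z * v - a * (Z - v)

/-- The direction field `Δ_v / Δ_Z` of the self-similar Euler equations. -/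
noncomputable def eulerField (m κ ℓ : ℝ) (x : ℝ × ℝ) : ℝ :=
  Deltav m κ x.1 x.2 / DeltaZ ℓ x.1 x.2

/-- The domain `Δ_Z > 0` in which the solution curves are sought. -/
def eulerDomain (ℓ : ℝ) : Set (ℝ × ℝ) :=
  {x | 0 < DeltaZ ℓ x.1 x.2}

variable {m κ ℓ a c ε Z : ℝ}

theorem Deltav_eq_mul (m κ Z v : ℝ) : Deltav m κ Z v = (1 - v ^ 2) * reducedDeltav m κ Z v :=
  rfl

theorem DeltaZ_sq_eq_mul (a Z v : ℝ) :
    DeltaZ (a ^ 2) Z v = Z * (sonicGap a Z v * sonicGap (-a) Z v) := by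
  unfold DeltaZ sonicGap; ring

theorem contDiff_Deltav (m κ : ℝ) :
    ContDiff ℝ (⊤ : ℕ∞) fun x : ℝ × ℝ ↦ Deltav m κ x.1 x.2 := by
  unfold Deltav; fun_prop

theorem contDiff_reducedDeltaZ (ℓ : ℝ) :
    ContDiff ℝ (⊤ : ℕ∞) fun x : ℝ × ℝ ↦ reducedDeltaZ ℓ x.1 x.2 := by
  unfold reducedDeltaZ; fun_prop

theorem contDiff_DeltaZ (ℓ : ℝ) :
    ContDiff ℝ (⊤ : ℕ∞) fun x : ℝ × ℝ ↦ DeltaZ ℓ x.1 x.2 := by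
  unfold DeltaZ; fun_prop

theorem isOpen_eulerDomain (ℓ : ℝ) : IsOpen (eulerDomain ℓ) :=
  isOpen_lt continuous_const (contDiff_DeltaZ ℓ).continuous

theorem contDiffOn_eulerField (m κ ℓ : ℝ) :
    ContDiffOn ℝ (⊤ : ℕ∞) (eulerField m κ ℓ) (eulerDomain ℓ) :=
  (contDiff_Deltav m κ).contDiffOn.div (contDiff_DeltaZ ℓ).contDiffOn fun _ hx ↦ ne_of_gt hx

theorem hasFDerivAt_reducedDeltav_zero (m κ : ℝ) :
    HasFDerivAt (fun x : ℝ × ℝ ↦ reducedDeltav m κ x.1 x.2)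
      (m • .fst ℝ ℝ ℝ - κ • .snd ℝ ℝ ℝ) 0 := by
  have hZ : HasFDerivAt Prod.fst (.fst ℝ ℝ ℝ) (0 : ℝ × ℝ) := hasFDerivAt_fst
  have hv : HasFDerivAt Prod.snd (.snd ℝ ℝ ℝ) (0 : ℝ × ℝ) := hasFDerivAt_snd
  exact (((((hv.pow 2).const_sub 1).const_mul m).mul hZ).sub
    ((hv.const_mul κ).mul ((hv.mul hZ).const_sub 1))).congr_fderiv (by ext <;> simp)

theorem hasFDerivAt_Deltav_zero (m κ : ℝ) :
    HasFDerivAt (fun x : ℝ × ℝ ↦ Deltav m κ x.1 x.2)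
      (m • .fst ℝ ℝ ℝ - κ • .snd ℝ ℝ ℝ) 0 := by
  have hv : HasFDerivAt Prod.snd (.snd ℝ ℝ ℝ) (0 : ℝ × ℝ) := hasFDerivAt_snd
  exact (((hv.pow 2).const_sub 1).mul (hasFDerivAt_reducedDeltav_zero m κ)).congr_fderiv
    (by ext <;> simp [reducedDeltav])

theorem IsSolutionOn.eqOn_Ioo_of_tendsto_zero (hκ : 0 < κ) {p q : ℝ → ℝ}
    (hp : IsSolutionOn (eulerField m κ ℓ) (eulerDomain ℓ) p (Ioo 0 c))
    (hq : IsSolutionOn (eulerField m κ ℓ) (eulerDomain ℓ) q (Ioo 0 c))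
    (hp0 : Tendsto p (𝓝[>] 0) (𝓝 0)) (hq0 : Tendsto q (𝓝[>] 0) (𝓝 0)) : EqOn p q (Ioo 0 c) := by
  intro Z hZ
  have hIoo : Ioo 0 Z ∈ 𝓝[>] 0 := Ioo_mem_nhdsGT hZ.1
  have hode {r : ℝ → ℝ} (hr : IsSolutionOn (eulerField m κ ℓ) (eulerDomain ℓ) r (Ioo 0 c)) :
      ∀ᶠ x in 𝓝[>] 0, HasDerivAt r (Deltav m κ x (r x) / (x * reducedDeltaZ ℓ x (r x))) x :=
    eventually_of_mem hIoo fun x hx ↦ hr.hasDerivAt isOpen_Ioo ⟨hx.1, hx.2.trans hZ.2⟩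
  have hgerm : p =ᶠ[𝓝[>] 0] q := eventuallyEq_of_briotBouquet hκ
    ((contDiff_Deltav m κ).of_le (by simp)).contDiffAt
    ((contDiff_reducedDeltaZ ℓ).of_le (by simp)).contDiffAt
    (by simp [Deltav]) (by simp [reducedDeltaZ]) (hasFDerivAt_Deltav_zero m κ) hp0 hq0
    (hode hp) (hode hq)
  obtain ⟨t, hpqt, ht⟩ := (hgerm.and hIoo).exists
  have hsub : Icc t Z ⊆ Ioo 0 c := Icc_subset_Ioo ht.1 hZ.2
  exact (hp.mono hsub).eqOn_Icc (hq.mono hsub) (isOpen_eulerDomain ℓ)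
    ((contDiffOn_eulerField m κ ℓ).of_le (by simp)) hpqt (right_mem_Icc.2 ht.2.le)

theorem exists_local_solution (m ℓ : ℝ) (hκ : 0 < κ) :
    ∃ u : ℝ → ℝ, ContDiffAt ℝ (⊤ : ℕ∞) u 0 ∧ u 0 = 0 ∧ deriv u 0 = m / (κ + 1) ∧
      ∃ t > 0, IsSolutionOn (eulerField m κ ℓ) (eulerDomain ℓ) u (Ioo 0 t) := by
  obtain ⟨u, hu, hu0, hode⟩ := exists_briotBouquet_solution hκ (contDiff_Deltav m κ)
    (contDiff_reducedDeltaZ ℓ) (by simp [Deltav]) (by simp [reducedDeltaZ])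
    (hasFDerivAt_Deltav_zero m κ)
  have hderiv := deriv_zero_of_briotBouquet hκ (contDiff_reducedDeltaZ ℓ).continuous.continuousAt
    (by simp [Deltav]) (by simp [reducedDeltaZ]) (hasFDerivAt_Deltav_zero m κ)
    (hu.of_le (by simp)) hu0 hode
  have hQ : ∀ᶠ Z in 𝓝 0, 0 < reducedDeltaZ ℓ Z (u Z) := by
    have hucont := hu.continuousAt
    have hcont : ContinuousAt (fun Z ↦ reducedDeltaZ ℓ Z (u Z)) 0 := by
      unfold reducedDeltaZ; fun_prop
    exact hcont.eventually (lt_mem_nhds (by simp [reducedDeltaZ, hu0]))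
  have hdiff : ∀ᶠ Z in 𝓝 0, DifferentiableAt ℝ u Z :=
    ((hu.of_le (m := 1) (by simp)).eventually (by simp)).mono fun Z h ↦
      h.differentiableAt (by simp)
  obtain ⟨t, ht, h⟩ := mem_nhdsGT_iff_exists_Ioo_subset.1
    (hode.and (nhdsWithin_le_nhds (hQ.and hdiff)))
  have hpos (Z : ℝ) (hZ : Z ∈ Ioo 0 t) : 0 < DeltaZ ℓ Z (u Z) := mul_pos hZ.1 (h hZ).2.1
  refine ⟨u, hu, hu0, hderiv, t, ht, hpos, fun Z hZ ↦ HasDerivAt.hasDerivWithinAt ?_⟩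
  have hslope : deriv u Z = eulerField m κ ℓ (Z, u Z) :=
    (eq_div_iff (hpos Z hZ).ne').2 <| (mul_comm _ _).trans (h hZ).1
  exact hslope ▸ (h hZ).2.2.hasDerivAt

/-- The parameter range of the theorem in terms of `a = √ℓ`, with `c` the abscissa `Z₁` of the
point `P₁`. -/
structure IsAdmissible (m κ a c : ℝ) : Prop where
  m_pos : 0 < m
  one_lt : 1 < a
  mul_add_one_lt : m * (a + 1) < κ * a
  sonic : c * (a ^ 2 * (κ - m) + m) = κ * a

theorem IsAdmissible.lt (h : IsAdmissible m κ a c) : m < κ := by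
  nlinarith [h.m_pos, h.one_lt, h.mul_add_one_lt]

theorem IsAdmissible.denom_pos (h : IsAdmissible m κ a c) : 0 < a ^ 2 * (κ - m) + m := by
  have := sub_pos.2 h.lt
  have := h.m_pos
  positivity

theorem IsAdmissible.κ_pos (h : IsAdmissible m κ a c) : 0 < κ :=
  h.m_pos.trans h.lt

theorem IsAdmissible.c_pos (h : IsAdmissible m κ a c) : 0 < c := by
  refine pos_of_mul_pos_left ?_ h.denom_pos.le
  rw [h.sonic]
  exact mul_pos h.κ_pos (one_pos.trans h.one_lt)

theorem IsAdmissible.c_lt_one (h : IsAdmissible m κ a c) : c < 1 := by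
  refine lt_of_mul_lt_mul_right ?_ h.denom_pos.le
  rw [h.sonic]
  linarith [mul_pos (sub_pos.2 h.one_lt) (sub_pos.2 h.mul_add_one_lt)]

theorem sonicGap_neg_pos {v : ℝ} (ha : 0 ≤ a) (hZ : Z ∈ Ioo 0 1) (hv : v ≤ Z) :
    0 < sonicGap (-a) Z v := by
  have := mul_nonneg ha (sub_nonneg.2 hv)
  have := mul_le_mul_of_nonneg_left hv hZ.1.le
  have := mul_lt_mul_of_pos_left hZ.2 hZ.1
  unfold sonicGap
  linarith [hZ.2]

/-- The curve `v = sonicBarrier a c ε Z` along which `sonicGap a Z v = ε * (c - Z)`; it is the sonic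
curve itself for `ε = 0`, and all these curves meet at `Z = c`. -/
noncomputable def sonicBarrier (a c ε Z : ℝ) : ℝ :=
  (a * Z - 1 + ε * (c - Z)) / (a - Z)

theorem sonicGap_sonicBarrier (hZ : Z < a) :
    sonicGap a Z (sonicBarrier a c ε Z) = ε * (c - Z) := by
  have := (sub_pos.2 hZ).ne'
  unfold sonicGap sonicBarrier
  field_simp
  ring

theorem sonicBarrier_le_iff {v : ℝ} (hZ : Z < a) :
    sonicBarrier a c ε Z ≤ v ↔ ε * (c - Z) ≤ sonicGap a Z v := by
  rw [sonicBarrier, div_le_iff₀ (sub_pos.2 hZ), sonicGap]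
  constructor <;> intro h <;> linarith

theorem hasDerivAt_sonicBarrier (hZ : Z < a) :
    HasDerivAt (sonicBarrier a c ε) ((a - ε + sonicBarrier a c ε Z) / (a - Z)) Z := by
  have hne := (sub_pos.2 hZ).ne'
  have hnum : HasDerivAt (fun x ↦ a * x - 1 + ε * (c - x)) (a * 1 + ε * -1) Z :=
    (((hasDerivAt_id Z).const_mul a).sub_const 1).add (((hasDerivAt_id Z).const_sub c).const_mul ε)
  refine (hnum.div ((hasDerivAt_id Z).const_sub a) hne).congr_deriv ?_
  simp only [sonicBarrier, id]
  field_simp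
  ring

theorem one_sub_sonicBarrier_zero_sq (hZ : Z < a) :
    1 - sonicBarrier a c 0 Z ^ 2 = (a ^ 2 - 1) * (1 - Z ^ 2) / (a - Z) ^ 2 := by
  have := (sub_pos.2 hZ).ne'
  unfold sonicBarrier
  field_simp
  ring

theorem reducedDeltav_sonicBarrier (hc : c * (a ^ 2 * (κ - m) + m) = κ * a) (hZ : Z < a) :
    (a - Z) ^ 2 * reducedDeltav m κ Z (sonicBarrier a c ε Z) =
      (c - Z) * ((1 - Z ^ 2) * (a ^ 2 * (κ - m) + m) + ε * ((a - Z) *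
        ((κ - m) * Z * (sonicBarrier a c ε Z + sonicBarrier a c 0 Z) - κ))) := by
  have := (sub_pos.2 hZ).ne'
  unfold reducedDeltav sonicBarrier
  field_simp
  linear_combination (Z ^ 2 - 1) * hc

/-- Up to a positive factor, the amount by which the slope of the direction field along the barrier
exceeds the slope of the barrier, arranged to be continuous for `ε` near `0` and `Z` up to `c`. -/
noncomputable def barrierMargin (m κ a c ε Z : ℝ) : ℝ :=
  (1 - sonicBarrier a c ε Z ^ 2) * ((1 - Z ^ 2) * (a ^ 2 * (κ - m) + m) + ε * ((a - Z) *
      ((κ - m) * Z * (sonicBarrier a c ε Z + sonicBarrier a c 0 Z) - κ))) -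
    ε * (Z * sonicGap (-a) Z (sonicBarrier a c ε Z) * (a - Z) * (a - ε + sonicBarrier a c ε Z))

theorem barrierMargin_zero_pos (h : IsAdmissible m κ a c) (hZ : Z ∈ Icc 0 c) :
    0 < barrierMargin m κ a c 0 Z := by
  have hZ1 : Z < 1 := hZ.2.trans_lt h.c_lt_one
  have hsq : 0 < 1 - Z ^ 2 := by nlinarith [hZ.1]
  have ha : 0 < a ^ 2 - 1 := by nlinarith [h.one_lt]
  have haZ : 0 < a - Z := by linarith [h.one_lt]
  have := h.denom_pos
  rw [barrierMargin, one_sub_sonicBarrier_zero_sq (sub_pos.1 haZ), zero_mul, zero_mul, add_zero,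
    sub_zero]
  positivity

theorem continuousAt_barrierMargin (hZ : Z < a) :
    ContinuousAt (fun x : ℝ × ℝ ↦ barrierMargin m κ a c x.1 x.2) (ε, Z) := by
  have := (sub_pos.2 hZ).ne'
  unfold barrierMargin sonicGap sonicBarrier
  fun_prop (disch := assumption)

theorem eventually_barrierMargin_pos (h : IsAdmissible m κ a c) :
    ∀ᶠ ε in 𝓝 0, ∀ Z ∈ Icc 0 c, 0 < barrierMargin m κ a c ε Z :=
  isCompact_Icc.eventually_forall_of_forall_eventually fun _ hZ ↦
    (continuousAt_barrierMargin (hZ.2.trans_lt (h.c_lt_one.trans h.one_lt))).eventually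
      (lt_mem_nhds (barrierMargin_zero_pos h hZ))

theorem sonicBarrier_le_self (ha : 1 < a) (hc : c ≤ 1) (hε : ε ≤ 1) (hZ : Z ∈ Ico 0 c) :
    sonicBarrier a c ε Z ≤ Z := by
  rw [sonicBarrier_le_iff (hZ.2.trans_le (hc.trans ha.le))]
  have := mul_le_of_le_one_left (sub_nonneg.2 hZ.2.le) hε
  have := mul_le_of_le_one_left hZ.1 (hZ.2.le.trans hc)
  unfold sonicGap
  linarith

theorem DeltaZ_pos_of_sonicBarrier_le {v : ℝ} (ha : 1 < a) (hc : c ≤ 1) (hε : 0 < ε)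
    (hZ : Z ∈ Ioo 0 c) (hv : v ∈ Icc (sonicBarrier a c ε Z) Z) : 0 < DeltaZ (a ^ 2) Z v := by
  have hZ1 : Z < 1 := hZ.2.trans_le hc
  rw [DeltaZ_sq_eq_mul]
  exact mul_pos hZ.1 <| mul_pos
    ((mul_pos hε (sub_pos.2 hZ.2)).trans_le ((sonicBarrier_le_iff (hZ1.trans ha)).1 hv.1))
    (sonicGap_neg_pos (by linarith) ⟨hZ.1, hZ1⟩ hv.2)

theorem deriv_sonicBarrier_lt (h : IsAdmissible m κ a c) (hε : ε ∈ Ioc 0 1) (hZ : Z ∈ Ioo 0 c)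
    (hmargin : 0 < barrierMargin m κ a c ε Z) :
    deriv (sonicBarrier a c ε) Z < eulerField m κ (a ^ 2) (Z, sonicBarrier a c ε Z) := by
  have hZa : Z < a := hZ.2.trans (h.c_lt_one.trans h.one_lt)
  have hpos := DeltaZ_pos_of_sonicBarrier_le h.one_lt h.c_lt_one.le hε.1 hZ
    (left_mem_Icc.2 (sonicBarrier_le_self h.one_lt h.c_lt_one.le hε.2 (Ioo_subset_Ico_self hZ)))
  have hsq : 0 < (a - Z) ^ 2 := pow_pos (sub_pos.2 hZa) 2
  have hB' : (a - ε + sonicBarrier a c ε Z) / (a - Z) * (a - Z) = a - ε + sonicBarrier a c ε Z :=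
    div_mul_cancel₀ _ (sub_pos.2 hZa).ne'
  have hN := reducedDeltav_sonicBarrier (ε := ε) h.sonic hZa
  have hprod := mul_pos (sub_pos.2 hZ.2) hmargin
  rw [(hasDerivAt_sonicBarrier hZa).deriv, eulerField, lt_div_iff₀ hpos]
  refine lt_of_mul_lt_mul_left ?_ hsq.le
  rw [DeltaZ_sq_eq_mul, sonicGap_sonicBarrier hZa, Deltav_eq_mul, ← sub_pos]
  refine hprod.trans_eq ?_
  unfold barrierMargin
  linear_combination -(1 - sonicBarrier a c ε Z ^ 2) * hN +
    (a - Z) * (Z * (ε * (c - Z) * sonicGap (-a) Z (sonicBarrier a c ε Z))) * hB'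

theorem eulerField_self_neg (hmκ : m < κ) (hZ : Z ∈ Ioo 0 1) : eulerField m κ ℓ (Z, Z) < 0 := by
  have hsq : 0 < 1 - Z ^ 2 := by nlinarith [hZ.1, hZ.2]
  have hDv : Deltav m κ Z Z = (m - κ) * (Z * (1 - Z ^ 2) ^ 2) := by unfold Deltav; ring
  have hDZ : DeltaZ ℓ Z Z = Z * (1 - Z ^ 2) ^ 2 := by unfold DeltaZ; ring
  have := mul_pos hZ.1 (pow_pos hsq 2)
  rw [eulerField, hDv, hDZ, mul_div_cancel_right₀ _ this.ne']
  exact sub_neg.2 hmκ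

theorem IsAdmissible.exists_isTrappingPair (h : IsAdmissible m κ a c) :
    ∃ ε ∈ Ioc 0 1, IsTrappingPair (eulerField m κ (a ^ 2)) (eulerDomain (a ^ 2))
      (sonicBarrier a c ε) (fun Z ↦ Z) (Ioo 0 c) := by
  obtain ⟨ε, hmargin, hε⟩ := (((eventually_barrierMargin_pos h).filter_mono
    nhdsWithin_le_nhds).and (Ioc_mem_nhdsGT one_pos)).exists
  refine ⟨ε, hε, fun Z hZ ↦ ?_, fun Z hZ v hv ↦ ?_, fun Z hZ ↦ ?_, fun Z _ ↦ differentiableAt_id,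
    fun Z hZ ↦ deriv_sonicBarrier_lt h hε hZ (hmargin Z (Ioo_subset_Icc_self hZ)), fun Z hZ ↦ ?_⟩
  · exact sonicBarrier_le_self h.one_lt h.c_lt_one.le hε.2 (Ioo_subset_Ico_self hZ)
  · exact DeltaZ_pos_of_sonicBarrier_le h.one_lt h.c_lt_one.le hε.1 hZ hv
  · exact (hasDerivAt_sonicBarrier (hZ.2.trans (h.c_lt_one.trans h.one_lt))).differentiableAt
  · rw [deriv_id'']
    exact (eulerField_self_neg h.lt ⟨hZ.1, hZ.2.trans h.c_lt_one⟩).trans one_pos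

theorem eventually_lt_self_of_deriv_lt_one {u : ℝ → ℝ} (hu : DifferentiableAt ℝ u 0) (hu0 : u 0 = 0)
    (hu' : deriv u 0 < 1) : ∀ᶠ Z in 𝓝[>] 0, u Z < Z := by
  filter_upwards [hu.hasDerivAt.tendsto_slope_zero_right.eventually (gt_mem_nhds hu'),
    self_mem_nhdsWithin] with Z hlt hZ
  rwa [zero_add, hu0, sub_zero, smul_eq_mul, inv_mul_lt_iff₀ hZ, mul_one] at hlt

theorem eventually_sonicBarrier_lt {u : ℝ → ℝ} (ha : 0 < a) (hεc : ε * c < 1)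
    (hu : ContinuousAt u 0) (hu0 : u 0 = 0) : ∀ᶠ Z in 𝓝 0, sonicBarrier a c ε Z < u Z := by
  refine (hasDerivAt_sonicBarrier ha).continuousAt.eventually_lt hu ?_
  rw [hu0, sonicBarrier, sub_zero, sub_zero]
  exact div_neg_of_neg_of_pos (by linarith) ha

theorem IsAdmissible.exists_solution (h : IsAdmissible m κ a c) :
    ∃ v : ℝ → ℝ, ContDiffAt ℝ (⊤ : ℕ∞) v 0 ∧ v 0 = 0 ∧ deriv v 0 = m / (κ + 1) ∧
      IsSolutionOn (eulerField m κ (a ^ 2)) (eulerDomain (a ^ 2)) v (Ioo 0 c) ∧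
      ∀ Z ∈ Ioo 0 c, v Z ≤ Z := by
  obtain ⟨u, hu, hu0, hu', t, ht, hsol⟩ := exists_local_solution m (a ^ 2) h.κ_pos
  obtain ⟨ε, hε, htrap⟩ := h.exists_isTrappingPair
  have hslope : deriv u 0 < 1 := by
    rw [hu', div_lt_one (by linarith [h.κ_pos])]
    linarith [h.lt]
  have hbelow := eventually_lt_self_of_deriv_lt_one (hu.differentiableAt (by simp)) hu0 hslope
  have habove := eventually_sonicBarrier_lt (one_pos.trans h.one_lt)
    ((mul_le_of_le_one_left h.c_pos.le hε.2).trans_lt h.c_lt_one) hu.continuousAt hu0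
  obtain ⟨t₁, ht₁, hregion⟩ := (mem_nhdsGT_iff_exists_mem_Ioc_Ioo_subset (lt_min ht h.c_pos)).1 <|
    hbelow.and (habove.filter_mono nhdsWithin_le_nhds)
  obtain ⟨t₀, ht₀⟩ := exists_between ht₁.1
  obtain ⟨v, hvu, hv, hvmem⟩ := (hsol.mono (Ioo_subset_Ioo_right (ht₁.2.trans
    (min_le_left _ _)))).exists_extension (isOpen_eulerDomain _)
    ((contDiffOn_eulerField m κ _).of_le (by simp)) ht₀ (ht₁.2.trans (min_le_right _ _))
    (htrap.mono fun Z hZ ↦ ⟨ht₀.1.trans_le hZ.1, hZ.2⟩)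
    ⟨(hregion ht₀).2.le, (hregion ht₀).1.le⟩
  have hgerm : v =ᶠ[𝓝 0] u := hvu.eventuallyEq_of_mem (Iic_mem_nhds ht₀.1)
  refine ⟨v, hu.congr_of_eventuallyEq hgerm, hgerm.eq_of_nhds.trans hu0,
    hgerm.deriv_eq.trans hu', hv, fun Z hZ ↦ ?_⟩
  rcases le_or_gt Z t₀ with hle | hgt
  · exact (hvu hle).trans_le (hregion ⟨hZ.1, hle.trans_lt ht₀.2⟩).1.le
  · exact (hvmem Z ⟨hgt.le, hZ.2⟩).2

theorem pos_of_deriv_pos_of_eq_zero {φ φ' : ℝ → ℝ} {l r : ℝ}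
    (hφ : ∀ z ∈ Ioo l r, HasDerivAt φ (φ' z) z) (hl : ∀ᶠ z in 𝓝[>] l, 0 < φ z)
    (hzero : ∀ z ∈ Ioo l r, φ z = 0 → 0 < φ' z) : ∀ z ∈ Ioo l r, 0 < φ z := by
  have hnonneg : ∀ z ∈ Ioo l r, 0 ≤ φ z := by
    intro z hz
    obtain ⟨s, hφs, hs⟩ := (hl.and (Ioo_mem_nhdsGT hz.1)).exists
    have hsub : Icc s z ⊆ Ioo l r := Icc_subset_Ioo hs.1 hz.2
    exact image_le_of_deriv_right_lt_deriv_boundary' continuousOn_const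
      (fun x _ ↦ hasDerivWithinAt_const x _ 0) hφs.le
      (fun x hx ↦ (hφ x (hsub hx)).continuousAt.continuousWithinAt)
      (fun x hx ↦ (hφ x (hsub (Ico_subset_Icc_self hx))).hasDerivWithinAt)
      (fun x hx h0 ↦ hzero x (hsub (Ico_subset_Icc_self hx)) h0.symm) (right_mem_Icc.2 hs.2.le)
  intro z hz
  refine (hnonneg z hz).lt_of_ne' fun h0 ↦ (hzero z hz h0).ne' ?_
  have hmin : IsLocalMin φ z :=
    eventually_of_mem (isOpen_Ioo.mem_nhds hz) fun x hx ↦ h0.trans_le (hnonneg x hx)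
  exact hmin.hasDerivAt_eq_zero (hφ z hz)

theorem hasDerivAt_reducedDeltav {v : ℝ → ℝ} {v' : ℝ} (hv : HasDerivAt v v' Z) :
    HasDerivAt (fun x ↦ reducedDeltav m κ x (v x))
      (m * (1 - v Z ^ 2) + κ * v Z ^ 2 - (κ - 2 * (κ - m) * Z * v Z) * v') Z := by
  have := (((hv.pow 2).const_sub 1).const_mul m).mul (hasDerivAt_id Z)
  refine (this.sub ((hv.const_mul κ).mul ((hv.mul (hasDerivAt_id Z)).const_sub 1))).congr_deriv ?_
  simp only [Nat.cast_ofNat, Nat.add_one_sub_one, pow_one, mul_neg, id_eq, neg_mul, Pi.pow_apply,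
    mul_one, Pi.mul_apply, neg_add_rev]
  ring

theorem reducedDeltav_pos_of_isSolutionOn {v : ℝ → ℝ} (hm : 0 < m) (hmκ : m < κ)
    (hv : DifferentiableAt ℝ v 0) (hv0 : v 0 = 0) (hv' : deriv v 0 = m / (κ + 1))
    (hsol : IsSolutionOn (eulerField m κ ℓ) (eulerDomain ℓ) v (Ioo 0 c)) :
    ∀ Z ∈ Ioo 0 c, 0 < reducedDeltav m κ Z (v Z) := by
  refine pos_of_deriv_pos_of_eq_zero
    (fun Z hZ ↦ hasDerivAt_reducedDeltav (hsol.hasDerivAt isOpen_Ioo hZ)) ?_ fun Z _ h0 ↦ ?_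
  · have hlim := tendsto_briotBouquet_slope (by simp [reducedDeltav])
      (hasFDerivAt_reducedDeltav_zero m κ) hv.hasDerivAt hv0
    have hpos : 0 < m - κ * deriv v 0 := by
      have : 0 < κ + 1 := by linarith
      rw [hv', show m - κ * (m / (κ + 1)) = m / (κ + 1) by field_simp; ring]
      positivity
    filter_upwards [hlim.eventually (lt_mem_nhds hpos), self_mem_nhdsWithin] with Z hdiv hZ
    exact (div_pos_iff_of_pos_right hZ).1 hdiv
  · have hfield : eulerField m κ ℓ (Z, v Z) = 0 := by simp [eulerField, Deltav_eq_mul, h0]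
    rw [hfield]
    linarith [mul_nonneg (sub_pos.2 hmκ).le (sq_nonneg (v Z))]

theorem pos_of_isSolutionOn {v : ℝ → ℝ} (hm : 0 < m) (hv : DifferentiableAt ℝ v 0) (hv0 : v 0 = 0)
    (hv' : 0 < deriv v 0) (hsol : IsSolutionOn (eulerField m κ ℓ) (eulerDomain ℓ) v (Ioo 0 c)) :
    ∀ Z ∈ Ioo 0 c, 0 < v Z := by
  refine pos_of_deriv_pos_of_eq_zero (fun Z hZ ↦ hsol.hasDerivAt isOpen_Ioo hZ) ?_ fun Z hZ h0 ↦ ?_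
  · filter_upwards [hv.hasDerivAt.tendsto_slope_zero_right.eventually (lt_mem_nhds hv'),
      self_mem_nhdsWithin] with Z hslope hZ
    rw [zero_add, hv0, sub_zero, smul_eq_mul] at hslope
    exact pos_of_mul_pos_right hslope (inv_pos.2 hZ).le
  · refine div_pos ?_ (hsol.graph_mem Z hZ)
    simpa [Deltav, h0] using mul_pos hm hZ.1

theorem lt_of_reducedDeltav_pos {v : ℝ} (h : IsAdmissible m κ a c) (hZ : Z ≤ c) (hv : v < a)
    (hN : 0 < reducedDeltav m κ Z v) : v < m / ((κ - m) * a) := by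
  have hκm := sub_pos.2 h.lt
  have ha : 0 < a := by linarith [h.one_lt]
  have hfactor : c * (κ - m) * ((m / ((κ - m) * a) - v) * (a - v)) =
      reducedDeltav m κ Z v + (c - Z) * (m + (κ - m) * v ^ 2) := by
    unfold reducedDeltav
    field_simp
    linear_combination -v * h.sonic
  have hpos : 0 < c * (κ - m) * ((m / ((κ - m) * a) - v) * (a - v)) := by
    have := h.m_pos
    have := sub_nonneg.2 hZ
    rw [hfactor]
    positivity
  exact sub_pos.1 <| pos_of_mul_pos_left (pos_of_mul_pos_right hpos
    (mul_pos h.c_pos hκm).le) (sub_pos.2 hv).le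

theorem tendsto_sonicBarrier_zero (h : IsAdmissible m κ a c) :
    Tendsto (sonicBarrier a c 0) (𝓝[<] c) (𝓝 (m / ((κ - m) * a))) := by
  have hca : c < a := h.c_lt_one.trans h.one_lt
  have hval : sonicBarrier a c 0 c = m / ((κ - m) * a) := by
    have := (sub_pos.2 h.lt).ne'
    have := (sub_pos.2 hca).ne'
    have : a ≠ 0 := by linarith [h.one_lt]
    unfold sonicBarrier
    field_simp
    linear_combination h.sonic
  rw [← hval]
  exact (hasDerivAt_sonicBarrier hca).continuousAt.tendsto.mono_left nhdsWithin_le_nhds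

theorem tendsto_of_isSolutionOn {v : ℝ → ℝ} (h : IsAdmissible m κ a c)
    (hsol : IsSolutionOn (eulerField m κ (a ^ 2)) (eulerDomain (a ^ 2)) v (Ioo 0 c))
    (hv : ∀ Z ∈ Ioo 0 c, v Z ≤ Z) (hN : ∀ Z ∈ Ioo 0 c, 0 < reducedDeltav m κ Z (v Z)) :
    Tendsto v (𝓝[<] c) (𝓝 (m / ((κ - m) * a))) := by
  have hIoo : Ioo 0 c ∈ 𝓝[<] c := Ioo_mem_nhdsLT h.c_pos
  refine tendsto_of_tendsto_of_tendsto_of_le_of_le' (tendsto_sonicBarrier_zero h)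
    tendsto_const_nhds (eventually_of_mem hIoo fun Z hZ ↦ ?_)
    (eventually_of_mem hIoo fun Z hZ ↦ ?_)
  · have hZ1 : Z < 1 := hZ.2.trans h.c_lt_one
    have hpos : 0 < DeltaZ (a ^ 2) Z (v Z) := hsol.graph_mem Z hZ
    have hgap : 0 < sonicGap (-a) Z (v Z) := sonicGap_neg_pos (by linarith [h.one_lt])
      ⟨hZ.1, hZ1⟩ (hv Z hZ)
    rw [DeltaZ_sq_eq_mul] at hpos
    rw [sonicBarrier_le_iff (hZ1.trans h.one_lt), zero_mul]
    exact (pos_of_mul_pos_left (pos_of_mul_pos_right hpos hZ.1.le) hgap.le).le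
  · have : v Z < a := (hv Z hZ).trans_lt (hZ.2.trans (h.c_lt_one.trans h.one_lt))
    exact (lt_of_reducedDeltav_pos h hZ.2.le this (hN Z hZ)).le

/-- `v` is a `P₀`–`P₁` curve on `[0, c)`: a smooth solution of the self-similar Euler equations
starting at the origin with `Δ_Z > 0`. Being cleared of denominators, the equation makes sense at
`Z = 0`, where `Δ_Z` vanishes. -/
def IsP0P1Curve (m κ ℓ c : ℝ) (v : ℝ → ℝ) : Prop :=
  ContDiffOn ℝ (⊤ : ℕ∞) v (Ico 0 c) ∧ v 0 = 0 ∧ (∀ Z ∈ Ioo 0 c, 0 < DeltaZ ℓ Z (v Z)) ∧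
    ∀ Z ∈ Ico 0 c, DeltaZ ℓ Z (v Z) * deriv v Z = Deltav m κ Z (v Z)

theorem IsSolutionOn.isP0P1Curve {v : ℝ → ℝ} (hv : ContDiffAt ℝ (⊤ : ℕ∞) v 0) (hv0 : v 0 = 0)
    (hsol : IsSolutionOn (eulerField m κ ℓ) (eulerDomain ℓ) v (Ioo 0 c)) :
    IsP0P1Curve m κ ℓ c v := by
  have hsmooth := hsol.contDiffOn isOpen_Ioo (contDiffOn_eulerField m κ ℓ)
  refine ⟨fun Z hZ ↦ ?_, hv0, hsol.graph_mem, fun Z hZ ↦ ?_⟩ <;>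
    rcases hZ.1.eq_or_lt with rfl | hZ0
  · exact hv.contDiffWithinAt
  · exact (hsmooth.contDiffAt (Ioo_mem_nhds hZ0 hZ.2)).contDiffWithinAt
  · simp [DeltaZ, Deltav, hv0]
  · rw [(hsol.hasDerivAt isOpen_Ioo ⟨hZ0, hZ.2⟩).deriv]
    exact mul_div_cancel₀ _ (ne_of_gt (hsol.graph_mem Z ⟨hZ0, hZ.2⟩))

theorem IsP0P1Curve.isSolutionOn {v : ℝ → ℝ} (h : IsP0P1Curve m κ ℓ c v) :
    IsSolutionOn (eulerField m κ ℓ) (eulerDomain ℓ) v (Ioo 0 c) := by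
  obtain ⟨hsmooth, -, hDZ, hode⟩ := h
  refine ⟨hDZ, fun Z hZ ↦ HasDerivAt.hasDerivWithinAt ?_⟩
  have hdiff : DifferentiableAt ℝ v Z :=
    (hsmooth.contDiffAt (Ico_mem_nhds hZ.1 hZ.2)).differentiableAt (by simp)
  have hslope : deriv v Z = eulerField m κ ℓ (Z, v Z) :=
    (eq_div_iff (hDZ Z hZ).ne').2 <| (mul_comm _ _).trans (hode Z (Ioo_subset_Ico_self hZ))
  exact hslope ▸ hdiff.hasDerivAt

theorem IsP0P1Curve.tendsto_zero {v : ℝ → ℝ} (h : IsP0P1Curve m κ ℓ c v) (hc : 0 < c) :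
    Tendsto v (𝓝[>] 0) (𝓝 0) := by
  have hlim : Tendsto v (𝓝[Ico 0 c] 0) (𝓝 (v 0)) := h.1.continuousOn 0 (left_mem_Ico.2 hc)
  rw [h.2.1] at hlim
  exact hlim.mono_left (nhdsWithin_le_of_mem (mem_of_superset (Ioo_mem_nhdsGT hc)
    Ioo_subset_Ico_self))

theorem IsP0P1Curve.eqOn {v w : ℝ → ℝ} (hκ : 0 < κ) (hv : IsP0P1Curve m κ ℓ c v)
    (hw : IsP0P1Curve m κ ℓ c w) : EqOn v w (Ico 0 c) := by
  intro Z hZ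
  rcases hZ.1.eq_or_lt with rfl | hZ0
  · rw [hv.2.1, hw.2.1]
  · have hc := hZ0.trans hZ.2
    exact hv.isSolutionOn.eqOn_Ioo_of_tendsto_zero hκ hw.isSolutionOn (hv.tendsto_zero hc)
      (hw.tendsto_zero hc) ⟨hZ0, hZ.2⟩

theorem isAdmissible_sqrt (hm : 0 < m) (hℓ : 1 < ℓ) (hκ : m * (1 + 1 / √ℓ) < κ) :
    IsAdmissible m κ (√ℓ) (κ * √ℓ / (ℓ * (κ - m) + m)) := by
  have ha : 1 < √ℓ := Real.lt_sqrt_of_sq_lt (by simpa using hℓ)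
  have hmul : m * (√ℓ + 1) < κ * √ℓ := by
    have := mul_lt_mul_of_pos_right hκ (one_pos.trans ha)
    rwa [mul_assoc, add_mul, one_mul, one_div_mul_cancel (one_pos.trans ha).ne'] at this
  have hmκ : m < κ := (le_mul_of_one_le_right hm.le (by simp)).trans_lt hκ
  have hdenom : 0 < ℓ * (κ - m) + m := by
    have := mul_pos (one_pos.trans hℓ) (sub_pos.2 hmκ)
    linarith
  refine ⟨hm, ha, hmul, ?_⟩
  rw [Real.sq_sqrt (by linarith), div_mul_cancel₀ _ hdenom.ne']

end SelfSimilarEuler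

theorem P0_P1_curve_general (m ℓ κ : ℝ) (hm : 0 < m) (hℓ : 1 < ℓ) (hκ : κ > m * (1 + 1 / √ℓ))
    (Z₁ v₁ : ℝ) (hZ₁ : Z₁ = κ * √ℓ / (ℓ * (κ - m) + m)) (hv₁ : v₁ = m / ((κ - m) * √ℓ)) :
    ∃ v : ℝ → ℝ, IsP0P1Curve m κ ℓ Z₁ v ∧
      (∀ w : ℝ → ℝ, IsP0P1Curve m κ ℓ Z₁ w → EqOn v w (Ico 0 Z₁)) ∧
      (∀ Z ∈ Ioo 0 Z₁, 0 < Deltav m κ Z (v Z) ∧ 0 < v Z ∧ v Z < 1) ∧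
      deriv v 0 = m / (κ + 1) ∧ Tendsto v (𝓝[<] Z₁) (𝓝 v₁) := by
  have hadm : IsAdmissible m κ (√ℓ) Z₁ := hZ₁ ▸ isAdmissible_sqrt hm hℓ hκ
  obtain ⟨v, hv, hv0, hv', hsol, hvZ⟩ := hadm.exists_solution
  have hN := reducedDeltav_pos_of_isSolutionOn hm hadm.lt (hv.differentiableAt (by simp)) hv0 hv'
    hsol
  have hlim := tendsto_of_isSolutionOn hadm hsol hvZ hN
  rw [← hv₁] at hlim
  rw [Real.sq_sqrt (by linarith)] at hsol
  have hcurve := hsol.isP0P1Curve hv hv0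
  have hlt (Z : ℝ) (hZ : Z ∈ Ioo 0 Z₁) : v Z < 1 :=
    (hvZ Z hZ).trans_lt (hZ.2.trans hadm.c_lt_one)
  have hvpos := pos_of_isSolutionOn hm (hv.differentiableAt (by simp)) hv0
    (hv' ▸ div_pos hm (by linarith [hadm.κ_pos])) hsol
  have hsq (Z : ℝ) (hZ : Z ∈ Ioo 0 Z₁) : 0 < 1 - v Z ^ 2 := by
    nlinarith [hvpos Z hZ, hlt Z hZ]
  exact ⟨v, hcurve, fun w hw ↦ hcurve.eqOn hadm.κ_pos hw,
    fun Z hZ ↦ ⟨mul_pos (hsq Z hZ) (hN Z hZ), hvpos Z hZ, hlt Z hZ⟩, hv', hlim⟩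

/-- Existence and uniqueness of the smooth `P₀ – P₁` solution curve of the self-similar
relativistic Euler ODE on `[0, Z₁)`, together with its qualitative properties. -/
theorem P0_P1_curve (m ℓ : ℝ) (k : ℕ) (hm : 0 < m) (hℓ : 1 < ℓ) (hk : 1 ≤ k)
    (hkm : (k : ℝ) > m * (1 + 1 / Real.sqrt ℓ))
    (Z₁ v₁ : ℝ)
    (hZ₁ : Z₁ = (k : ℝ) * Real.sqrt ℓ / (ℓ * ((k : ℝ) - m) + m))
    (hv₁ : v₁ = m / (((k : ℝ) - m) * Real.sqrt ℓ)) :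
    ∃ v : ℝ → ℝ,
      (ContDiffOn ℝ (⊤ : ℕ∞) v (Ico 0 Z₁) ∧ v 0 = 0 ∧
        (∀ Z ∈ Ioo (0 : ℝ) Z₁, 0 < DeltaZ ℓ Z (v Z)) ∧
        (∀ Z ∈ Ico (0 : ℝ) Z₁, DeltaZ ℓ Z (v Z) * deriv v Z = Deltav m (k : ℝ) Z (v Z))) ∧
      (∀ w : ℝ → ℝ,
        (ContDiffOn ℝ (⊤ : ℕ∞) w (Ico 0 Z₁) ∧ w 0 = 0 ∧
          (∀ Z ∈ Ioo (0 : ℝ) Z₁, 0 < DeltaZ ℓ Z (w Z)) ∧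
          (∀ Z ∈ Ico (0 : ℝ) Z₁, DeltaZ ℓ Z (w Z) * deriv w Z = Deltav m (k : ℝ) Z (w Z))) →
        EqOn v w (Ico 0 Z₁)) ∧
      (∀ Z ∈ Ioo (0 : ℝ) Z₁,
        0 < Deltav m (k : ℝ) Z (v Z) ∧ 0 < v Z ∧ v Z < 1) ∧
      deriv v 0 = m / ((k : ℝ) + 1) ∧
      Tendsto v (𝓝[<] Z₁) (𝓝 v₁) :=
  P0_P1_curve_general m ℓ k hm hℓ hkm Z₁ v₁ hZ₁ hv₁
end

section
/- Let γ > 0 be a real number. Define Ψ(Z, v) := (z, u) with z := ((1 + γv²)Z − (1+γ)v)/(Z(1 − v²)) and u := (1+γ)²(1 − Zv)²/(Z²(1 − v²)), and define Θ(z, u) := ((1+γ)·√(u + (1−z)²)/(u + (1+γ)(1−z)), (1−z)/√(u + (1−z)²)). Let R₀ := {(Z, v) ∈ ℝ² : 0 < v < 1 and 0 < Zv < 1} and D₀ := {(z, u) ∈ ℝ² : u > 0 and z < 1}. Then Ψ maps R₀ bijectively onto D₀, and Θ is its inverse: Θ(Ψ(Z, v)) = (Z, v) for all (Z, v) ∈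 R₀ and Ψ(Θ(z, u)) = (z, u) for all (z, u) ∈ D₀. -/
/-!
Let `(ρ, v)` be the radius and the cosine of the angle of the point `(1 - z, √u)` in polar
coordinates, so that `z = 1 - ρ v` and `u = ρ² (1 - v²)`. Then `Ψ` leaves `v` unchanged and replaces
`Z` by the radius `ρ = (1 + γ) (1 - Z v) / (Z (1 - v²))`. For fixed `v` this is a Möbius function
of `Z`, with inverse `Z = (1 + γ) / (ρ (1 - v²) + (1 + γ) v)`, so both coordinate changes can be
inverted explicitly.
-/

open Set

/-- The renormalization map `Ψ : (Z, v) ↦ (z, u)`. -/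
noncomputable def PsiMap (γ : ℝ) (p : ℝ × ℝ) : ℝ × ℝ :=
  (((1 + γ * p.2 ^ 2) * p.1 - (1 + γ) * p.2) / (p.1 * (1 - p.2 ^ 2)),
   (1 + γ) ^ 2 * (1 - p.1 * p.2) ^ 2 / (p.1 ^ 2 * (1 - p.2 ^ 2)))

/-- The inverse renormalization map `Θ : (z, u) ↦ (Z, v)`. -/
noncomputable def ThetaMap (γ : ℝ) (q : ℝ × ℝ) : ℝ × ℝ :=
  ((1 + γ) * Real.sqrt (q.2 + (1 - q.1) ^ 2) / (q.2 + (1 + γ) * (1 - q.1)),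
   (1 - q.1) / Real.sqrt (q.2 + (1 - q.1) ^ 2))

/-- The region `R₀` of the self-similar `(Z, v)` phase plane. -/
def selfSimilarRegion : Set (ℝ × ℝ) :=
  {p | 0 < p.2 ∧ p.2 < 1 ∧ 0 < p.1 * p.2 ∧ p.1 * p.2 < 1}

/-- The region `D₀` of the quasi-linear `(z, u)` plane. -/
def quasiLinearRegion : Set (ℝ × ℝ) :=
  {q | 0 < q.2 ∧ q.1 < 1}

/-- The intermediate region of pairs `(ρ, v)`, with `ρ` a radius and `v` the cosine of an angle in
the open first quadrant. -/
def polarRegion : Set (ℝ × ℝ) :=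
  Ioi 0 ×ˢ Ioo 0 1

/-- The passage `(Z, v) ↦ (ρ, v)` from the self-similar variable `Z` to the radius `ρ`, a Möbius
function of `Z`. The map `Ψ` corresponds to `c = 1 + γ`. -/
noncomputable def radiusMap (c : ℝ) (p : ℝ × ℝ) : ℝ × ℝ :=
  (c * (1 - p.1 * p.2) / (p.1 * (1 - p.2 ^ 2)), p.2)

/-- The inverse `(ρ, v) ↦ (Z, v)` of `radiusMap c`. -/
noncomputable def radiusInv (c : ℝ) (r : ℝ × ℝ) : ℝ × ℝ :=
  (c / (r.1 * (1 - r.2 ^ 2) + c * r.2), r.2)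

/-- The passage `(ρ, v) ↦ (z, u)` out of polar coordinates on the plane of the points `(1 - z, √u)`,
the angle being encoded by its cosine `v`. -/
def polarMap (r : ℝ × ℝ) : ℝ × ℝ :=
  (1 - r.1 * r.2, r.1 ^ 2 * (1 - r.2 ^ 2))

/-- The inverse `(z, u) ↦ (ρ, v)` of `polarMap`. -/
noncomputable def polarInv (q : ℝ × ℝ) : ℝ × ℝ :=
  (√(q.2 + (1 - q.1) ^ 2), (1 - q.1) / √(q.2 + (1 - q.1) ^ 2))

lemma one_sub_sq_pos {v : ℝ} (hv₀ : 0 ≤ v) (hv₁ : v < 1) : 0 < 1 - v ^ 2 :=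
  sub_pos.2 (pow_lt_one₀ hv₀ hv₁ two_ne_zero)

section Radius

variable {c : ℝ}

lemma radiusInv_radiusMap (hc : c ≠ 0) {p : ℝ × ℝ} (hZ : p.1 ≠ 0) (hv : 1 - p.2 ^ 2 ≠ 0) :
    radiusInv c (radiusMap c p) = p := by
  obtain ⟨Z, v⟩ := p
  dsimp only at hZ hv
  have denom_eq : c * (1 - Z * v) / (Z * (1 - v ^ 2)) * (1 - v ^ 2) + c * v = c / Z := by
    field_simp
    ring
  simp only [radiusInv, radiusMap, denom_eq, div_div_cancel₀ hc]

lemma radiusMap_radiusInv (hc : c ≠ 0) {r : ℝ × ℝ} (hv : 1 - r.2 ^ 2 ≠ 0)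
    (hd : r.1 * (1 - r.2 ^ 2) + c * r.2 ≠ 0) : radiusMap c (radiusInv c r) = r := by
  obtain ⟨ρ, v⟩ := r
  dsimp only at hv hd
  have one_sub_eq : 1 - c / (ρ * (1 - v ^ 2) + c * v) * v =
      ρ * (1 - v ^ 2) / (ρ * (1 - v ^ 2) + c * v) := by
    field_simp
    ring
  simp only [radiusMap, radiusInv, one_sub_eq, Prod.mk.injEq, and_true]
  field_simp

lemma mapsTo_radiusMap (hc : 0 < c) : MapsTo (radiusMap c) selfSimilarRegion polarRegion := by
  rintro ⟨Z, v⟩ ⟨hv₀, hv₁, hZv₀, hZv₁⟩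
  have hZ : 0 < Z := pos_of_mul_pos_left hZv₀ hv₀.le
  have hv : 0 < 1 - v ^ 2 := one_sub_sq_pos hv₀.le hv₁
  exact ⟨div_pos (mul_pos hc (sub_pos.2 hZv₁)) (mul_pos hZ hv), hv₀, hv₁⟩

lemma mapsTo_radiusInv (hc : 0 < c) : MapsTo (radiusInv c) polarRegion selfSimilarRegion := by
  rintro ⟨ρ, v⟩ ⟨hρ, hv₀, hv₁⟩
  have hρv : 0 < ρ * (1 - v ^ 2) := mul_pos hρ (one_sub_sq_pos hv₀.le hv₁)
  have hcv : 0 < c * v := mul_pos hc hv₀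
  have hd : 0 < ρ * (1 - v ^ 2) + c * v := add_pos hρv hcv
  refine ⟨hv₀, hv₁, mul_pos (div_pos hc hd) hv₀, ?_⟩
  calc
    c / (ρ * (1 - v ^ 2) + c * v) * v = c * v / (ρ * (1 - v ^ 2) + c * v) := div_mul_eq_mul_div ..
    _ < 1 := (div_lt_one hd).2 (lt_add_of_pos_left _ hρv)

lemma invOn_radiusInv_radiusMap (hc : 0 < c) :
    InvOn (radiusInv c) (radiusMap c) selfSimilarRegion polarRegion := by
  constructor
  · rintro p ⟨hv₀, hv₁, hZv₀, -⟩
    exact radiusInv_radiusMap hc.ne' (left_ne_zero_of_mul hZv₀.ne') (one_sub_sq_pos hv₀.le hv₁).ne'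
  · rintro r ⟨hρ, hv₀, hv₁⟩
    have hv : 0 < 1 - r.2 ^ 2 := one_sub_sq_pos hv₀.le hv₁
    exact radiusMap_radiusInv hc.ne' hv.ne' (add_pos (mul_pos hρ hv) (mul_pos hc hv₀)).ne'

end Radius

lemma polarInv_polarMap {r : ℝ × ℝ} (hρ : 0 < r.1) : polarInv (polarMap r) = r := by
  obtain ⟨ρ, v⟩ := r
  dsimp only at hρ
  have sqrt_eq : √(ρ ^ 2 * (1 - v ^ 2) + (ρ * v) ^ 2) = ρ := by
    rw [show ρ ^ 2 * (1 - v ^ 2) + (ρ * v) ^ 2 = ρ ^ 2 by ring, Real.sqrt_sq hρ.le]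
  simp only [polarInv, polarMap, sub_sub_cancel, sqrt_eq, mul_div_cancel_left₀ v hρ.ne']

lemma polarMap_polarInv {q : ℝ × ℝ} (hq : 0 < q.2 + (1 - q.1) ^ 2) :
    polarMap (polarInv q) = q := by
  have hρ : √(q.2 + (1 - q.1) ^ 2) ≠ 0 := (Real.sqrt_pos.2 hq).ne'
  ext
  · simp only [polarMap, polarInv, mul_div_cancel₀ _ hρ, sub_sub_cancel]
  · calc
      √(q.2 + (1 - q.1) ^ 2) ^ 2 * (1 - ((1 - q.1) / √(q.2 + (1 - q.1) ^ 2)) ^ 2) =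
          √(q.2 + (1 - q.1) ^ 2) ^ 2 - (1 - q.1) ^ 2 := by field_simp
      _ = q.2 := by rw [Real.sq_sqrt hq.le, add_sub_cancel_right]

lemma mapsTo_polarMap : MapsTo polarMap polarRegion quasiLinearRegion := by
  rintro ⟨ρ, v⟩ ⟨hρ, hv₀, hv₁⟩
  exact ⟨mul_pos (pow_pos hρ 2) (one_sub_sq_pos hv₀.le hv₁), sub_lt_self 1 (mul_pos hρ hv₀)⟩

lemma mapsTo_polarInv : MapsTo polarInv quasiLinearRegion polarRegion := by
  rintro ⟨z, u⟩ ⟨hu, hz⟩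
  have hz' : 0 < 1 - z := sub_pos.2 hz
  have hlt : 1 - z < √(u + (1 - z) ^ 2) := Real.lt_sqrt_of_sq_lt (lt_add_of_pos_left _ hu)
  have hρ : 0 < √(u + (1 - z) ^ 2) := hz'.trans hlt
  exact ⟨hρ, div_pos hz' hρ, (div_lt_one hρ).2 hlt⟩

lemma invOn_polarInv_polarMap : InvOn polarInv polarMap polarRegion quasiLinearRegion :=
  ⟨fun _ hr ↦ polarInv_polarMap hr.1,
    fun _ hq ↦ polarMap_polarInv (add_pos_of_pos_of_nonneg hq.1 (sq_nonneg _))⟩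

lemma PsiMap_eq_polarMap_radiusMap (γ : ℝ) {p : ℝ × ℝ} (hZ : p.1 ≠ 0) (hv : 1 - p.2 ^ 2 ≠ 0) :
    PsiMap γ p = polarMap (radiusMap (1 + γ) p) := by
  ext <;> simp only [PsiMap, polarMap, radiusMap] <;> field_simp
  ring

lemma ThetaMap_eq_radiusInv_polarInv (γ : ℝ) {q : ℝ × ℝ} (hq : 0 < q.2 + (1 - q.1) ^ 2) :
    ThetaMap γ q = radiusInv (1 + γ) (polarInv q) := by
  have hρ : √(q.2 + (1 - q.1) ^ 2) ≠ 0 := (Real.sqrt_pos.2 hq).ne'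
  have hρ_sq : √(q.2 + (1 - q.1) ^ 2) ^ 2 = q.2 + (1 - q.1) ^ 2 := Real.sq_sqrt hq.le
  simp only [ThetaMap, radiusInv, polarInv, Prod.mk.injEq, and_true]
  set ρ := √(q.2 + (1 - q.1) ^ 2)
  have denom_eq : ρ * (1 - ((1 - q.1) / ρ) ^ 2) + (1 + γ) * ((1 - q.1) / ρ) =
      (q.2 + (1 + γ) * (1 - q.1)) / ρ := by
    field_simp
    rw [hρ_sq]
    ring
  rw [denom_eq, div_div_eq_mul_div]

lemma eqOn_polarMap_comp_radiusMap (γ : ℝ) :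
    EqOn (polarMap ∘ radiusMap (1 + γ)) (PsiMap γ) selfSimilarRegion :=
  fun _ ⟨hv₀, hv₁, hZv₀, _⟩ ↦ (PsiMap_eq_polarMap_radiusMap γ (left_ne_zero_of_mul hZv₀.ne')
    (one_sub_sq_pos hv₀.le hv₁).ne').symm

lemma eqOn_radiusInv_comp_polarInv (γ : ℝ) :
    EqOn (radiusInv (1 + γ) ∘ polarInv) (ThetaMap γ) quasiLinearRegion :=
  fun _ hq ↦ (ThetaMap_eq_radiusInv_polarInv γ
    (add_pos_of_pos_of_nonneg hq.1 (sq_nonneg _))).symm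

theorem PsiMap_bijOn_inverse_general (γ : ℝ) (hγ : -1 < γ) :
    BijOn (PsiMap γ) selfSimilarRegion quasiLinearRegion ∧
      InvOn (ThetaMap γ) (PsiMap γ) selfSimilarRegion quasiLinearRegion := by
  have hc : 0 < 1 + γ := neg_lt_iff_pos_add'.1 hγ
  have hΨ : MapsTo (PsiMap γ) selfSimilarRegion quasiLinearRegion :=
    (mapsTo_polarMap.comp (mapsTo_radiusMap hc)).congr (eqOn_polarMap_comp_radiusMap γ)
  have hΘ : MapsTo (ThetaMap γ) quasiLinearRegion selfSimilarRegion :=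
    ((mapsTo_radiusInv hc).comp mapsTo_polarInv).congr (eqOn_radiusInv_comp_polarInv γ)
  obtain ⟨hradius_left, hradius_right⟩ := invOn_radiusInv_radiusMap hc
  obtain ⟨hpolar_left, hpolar_right⟩ := invOn_polarInv_polarMap
  have hleft : LeftInvOn (ThetaMap γ) (PsiMap γ) selfSimilarRegion :=
    ((hradius_left.comp hpolar_left (mapsTo_radiusMap hc)).congr_right
      (eqOn_polarMap_comp_radiusMap γ)).congr_left hΨ (eqOn_radiusInv_comp_polarInv γ)
  have hright : RightInvOn (ThetaMap γ) (PsiMap γ) quasiLinearRegion :=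
    ((hradius_right.comp hpolar_right mapsTo_polarInv).congr_left
      (eqOn_radiusInv_comp_polarInv γ)).congr_right hΘ (eqOn_polarMap_comp_radiusMap γ)
  have hinv : InvOn (ThetaMap γ) (PsiMap γ) selfSimilarRegion quasiLinearRegion :=
    ⟨hleft, hright⟩
  exact ⟨hinv.bijOn hΨ hΘ, hinv⟩

/-- `Ψ` maps `R₀` bijectively onto `D₀`, with inverse `Θ`. -/
theorem PsiMap_bijOn_inverse (γ : ℝ) (hγ : 0 < γ) :
    Set.BijOn (PsiMap γ)
      {p : ℝ × ℝ | 0 < p.2 ∧ p.2 < 1 ∧ 0 < p.1 * p.2 ∧ p.1 * p.2 < 1}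
      {q : ℝ × ℝ | 0 < q.2 ∧ q.1 < 1} ∧
    (∀ p ∈ {p : ℝ × ℝ | 0 < p.2 ∧ p.2 < 1 ∧ 0 < p.1 * p.2 ∧ p.1 * p.2 < 1},
      ThetaMap γ (PsiMap γ p) = p) ∧
    (∀ q ∈ {q : ℝ × ℝ | 0 < q.2 ∧ q.1 < 1}, PsiMap γ (ThetaMap γ q) = q) :=
  PsiMap_bijOn_inverse_general γ (neg_one_lt_zero.trans hγ)
end

section
/- Assume k is a positive integer, ℓ > 1 and γ > 1/√ℓ are reals; set ε := ℓγ² − 1, A := k + 2 − (k − 2ℓ)γ, B := 2k + 1 − ℓ, u_p(z) := (k − B)z² + (A − k)z + ε, u_b(z) := (ε + (A − ε)z − (A + B)z² + Bz³)/(1 − (k+1)z) and u_g(z) := ℓ(z + γ)² − (1 − z)². Then u_p(z) < u_g(z) < u_b(z) for every z ∈ (0, 1/(k+1)); in fact u_p(z) − u_g(z) = −kz(z + γ) for all real z. -/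
open Set

/-!
Substituting `ε`, `A`, `B` gives `u_p = u_g - k z (z + γ)`, hence `u_p < u_g`. Since the numerator
of `u_b` is `-(1 - z) f(z)` and `-f(z) = u_p + k z (1 - z)`, the first identity and
`u_g + (1 - z) ^ 2 = ℓ (z + γ) ^ 2` give
`(1 - (k + 1) z) (u_b - u_g) = k z (z + γ) (ℓ (z + γ) - (1 - z))`,
whose last factor is positive as soon as `1 ≤ ℓ γ`.
-/

namespace SelfSimilarEuler

section CommRing

variable {R : Type*} [CommRing R] (k ℓ γ z : R)

/-- The parameter `ε` of `f(z) = -ε - A z + B z ^ 2`. -/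
def epsilon : R := ℓ * γ ^ 2 - 1

/-- The coefficient `A` of `f(z) = -ε - A z + B z ^ 2`. -/
def coeffA : R := k + 2 - (k - 2 * ℓ) * γ

/-- The coefficient `B` of `f(z) = -ε - A z + B z ^ 2`. -/
def coeffB : R := 2 * k + 1 - ℓ

/-- The curve `u_p`: the zero set of `Δ_u(z, u) = 2 u (u + f(z) + k z (1 - z))` other than `u = 0`,
as a function of `z`. -/
def uP : R := (k - coeffB k ℓ) * z ^ 2 + (coeffA k ℓ γ - k) * z + epsilon ℓ γ

/-- The curve `u_g`: the image of the sonic curve `Δ_Z = 0`, as a function of `z`. -/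
def uG : R := ℓ * (z + γ) ^ 2 - (1 - z) ^ 2

theorem uP_sub_uG : uP k ℓ γ z - uG ℓ γ z = -(k * z * (z + γ)) := by
  unfold uP uG epsilon coeffA coeffB
  ring

end CommRing

section Field

variable {F : Type*} [Field F] (k ℓ γ : F) {z : F}

/-- The curve `u_b`: the zero set of `Δ_z(z, u) = ((k + 1) z - 1) u + (z - 1) f(z)`, as a function
of `z`. At `(k + 1) z = 1` the quotient takes the junk value `0`. -/
def uB (z : F) : F :=
  (epsilon ℓ γ + (coeffA k ℓ γ - epsilon ℓ γ) * z - (coeffA k ℓ γ + coeffB k ℓ) * z ^ 2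
    + coeffB k ℓ * z ^ 3) / (1 - (k + 1) * z)

theorem uB_eq_div (z : F) :
    uB k ℓ γ z = (1 - z) * (uP k ℓ γ z + k * z * (1 - z)) / (1 - (k + 1) * z) := by
  unfold uB uP
  congr 1
  ring

theorem uB_sub_uG (hz : 1 - (k + 1) * z ≠ 0) :
    uB k ℓ γ z - uG ℓ γ z =
      k * z * (z + γ) * (ℓ * (z + γ) - (1 - z)) / (1 - (k + 1) * z) := by
  have uP_eq : uP k ℓ γ z = uG ℓ γ z - k * z * (z + γ) := by
    rw [sub_eq_iff_eq_add'.mp (uP_sub_uG k ℓ γ z), sub_eq_add_neg]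
  rw [uB_eq_div, uP_eq, div_sub' hz]
  congr 1
  unfold uG
  ring

end Field

section LinearOrderedField

variable {F : Type*} [Field F] [LinearOrder F] [IsStrictOrderedRing F] {k ℓ γ z : F}

theorem uP_lt_uG (hk : 0 < k) (hz : 0 < z) (hzγ : 0 < z + γ) : uP k ℓ γ z < uG ℓ γ z := by
  rw [← sub_neg, uP_sub_uG]
  exact neg_neg_of_pos (by positivity)

theorem uG_lt_uB (hk : 0 < k) (hz : 0 < z) (hz' : z < 1 / (k + 1)) (hzγ : 0 < z + γ)
    (hℓ : 1 - z < ℓ * (z + γ)) : uG ℓ γ z < uB k ℓ γ z := by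
  have denom_pos : 0 < 1 - (k + 1) * z :=
    sub_pos.mpr ((lt_div_iff₀' (by positivity)).mp hz')
  have factor_pos : 0 < ℓ * (z + γ) - (1 - z) := sub_pos.mpr hℓ
  rw [← sub_pos, uB_sub_uG k ℓ γ denom_pos.ne']
  exact div_pos (mul_pos (mul_pos (mul_pos hk hz) hzγ) factor_pos) denom_pos

end LinearOrderedField

theorem one_lt_mul_of_one_div_sqrt_lt {ℓ γ : ℝ} (hℓ : 1 ≤ ℓ) (hγ : 1 / √ℓ < γ) : 1 < ℓ * γ :=
  calc
    1 ≤ √ℓ := Real.one_le_sqrt.mpr hℓ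
    _ = ℓ * (1 / √ℓ) := by rw [mul_one_div, Real.div_sqrt]
    _ < ℓ * γ := by gcongr

end SelfSimilarEuler

open SelfSimilarEuler in
theorem up_lt_ug_lt_ub_general {F : Type*} [Field F] [LinearOrder F] [IsStrictOrderedRing F]
    {k ℓ γ : F} (hk : 0 < k) (hγ : 0 < γ) (hℓγ : 1 ≤ ℓ * γ) :
    (∀ z ∈ Ioo 0 (1 / (k + 1)), uP k ℓ γ z < uG ℓ γ z ∧ uG ℓ γ z < uB k ℓ γ z) ∧
      ∀ z, uP k ℓ γ z - uG ℓ γ z = -(k * z * (z + γ)) := by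
  refine ⟨fun z ⟨hz, hz'⟩ => ?_, uP_sub_uG k ℓ γ⟩
  have hzγ : 0 < z + γ := add_pos hz hγ
  have hℓ : 0 < ℓ := pos_of_mul_pos_left (one_pos.trans_le hℓγ) hγ.le
  have one_sub_lt : 1 - z < ℓ * (z + γ) :=
    calc
      1 - z < 1 := sub_lt_self 1 hz
      _ ≤ ℓ * γ := hℓγ
      _ < ℓ * (z + γ) := by gcongr; exact lt_add_of_pos_left γ hz
  exact ⟨uP_lt_uG hk hz hzγ, uG_lt_uB hk hz hz' hzγ one_sub_lt⟩

/-- Relative positions of the curves `u_p`, `u_g`, `u_b` in the renormalized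
`(z, u)` plane on the interval `(0, 1/(k+1))`. -/
theorem up_lt_ug_lt_ub (k : ℕ) (hk : 1 ≤ k) (ℓ γ : ℝ) (hℓ : 1 < ℓ)
    (hγ : 1 / Real.sqrt ℓ < γ)
    (ε A B : ℝ)
    (hε : ε = ℓ * γ ^ 2 - 1)
    (hA : A = (k : ℝ) + 2 - ((k : ℝ) - 2 * ℓ) * γ)
    (hB : B = 2 * (k : ℝ) + 1 - ℓ) :
    (∀ z ∈ Ioo (0 : ℝ) (1 / ((k : ℝ) + 1)),
      ((k : ℝ) - B) * z ^ 2 + (A - (k : ℝ)) * z + ε < ℓ * (z + γ) ^ 2 - (1 - z) ^ 2 ∧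
      ℓ * (z + γ) ^ 2 - (1 - z) ^ 2
        < (ε + (A - ε) * z - (A + B) * z ^ 2 + B * z ^ 3) / (1 - ((k : ℝ) + 1) * z)) ∧
    (∀ z : ℝ,
      (((k : ℝ) - B) * z ^ 2 + (A - (k : ℝ)) * z + ε) - (ℓ * (z + γ) ^ 2 - (1 - z) ^ 2)
        = -((k : ℝ) * z * (z + γ))) := by
  subst hε hA hB
  have hγ_pos : 0 < γ := (one_div_nonneg.mpr (Real.sqrt_nonneg ℓ)).trans_lt hγ
  exact up_lt_ug_lt_ub_general (Nat.cast_pos.mpr hk) hγ_pos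
    (SelfSimilarEuler.one_lt_mul_of_one_div_sqrt_lt hℓ.le hγ).le
end

section
/- Assume k is a positive integer, ℓ > 1 and γ > 1/√ℓ are reals; set ε := ℓγ² − 1, A := k + 2 − (k − 2ℓ)γ and p₀(x) := x² − ((k−2)ε + A)x + 2(k − A)ε. Then: (i) for every real s, p₀(2(1 + sγ)) = 2(2s + k)(s − ℓ)γ² + 2(k − 2ℓ − (k−2)s)·ℓγ³; (ii) p₀(2(1 + ℓγ)) = 2kℓγ³(1 − ℓ) < 0; consequently p₀ has two distinct real roots, and its larger root a₁ satisfies a₁ > 2(1 + ℓγ) > 4. -/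
open Set

/- At `x = 2(1 + ℓγ)` the slope polynomial collapses to a single negative monomial, and a quadratic
with positive leading coefficient that is negative at a point has one root on each side of it. The
lower bound `4` comes from `ℓγ > √ℓ > 1`. -/

/-- The quadratic `p₀` in `x` whose roots are the possible slopes at the sonic point `Q₁`, where
`ε` and `A` are written out in terms of the parameters `k`, `ℓ`, `γ` of the ODE. -/
def slopePolynomial {R : Type*} [CommRing R] (k ℓ γ x : R) : R :=
  let ε := ℓ * γ ^ 2 - 1
  let A := k + 2 - (k - 2 * ℓ) * γ
  x ^ 2 - ((k - 2) * ε + A) * x + 2 * (k - A) * ε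

theorem slopePolynomial_two_mul_one_add_mul {R : Type*} [CommRing R] (k ℓ γ s : R) :
    slopePolynomial k ℓ γ (2 * (1 + s * γ)) =
      2 * (2 * s + k) * (s - ℓ) * γ ^ 2 + 2 * (k - 2 * ℓ - (k - 2) * s) * ℓ * γ ^ 3 := by
  simp only [slopePolynomial]
  ring

theorem slopePolynomial_two_mul_one_add_self_mul {R : Type*} [CommRing R] (k ℓ γ : R) :
    slopePolynomial k ℓ γ (2 * (1 + ℓ * γ)) = 2 * k * ℓ * γ ^ 3 * (1 - ℓ) := by
  rw [slopePolynomial_two_mul_one_add_mul]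
  ring

theorem exists_quadratic_roots_of_neg {a b c y : ℝ} (ha : 0 < a)
    (hy : a * (y * y) + b * y + c < 0) :
    ∃ x₁ x₂ : ℝ, x₁ < y ∧ y < x₂ ∧ ∀ x, a * (x * x) + b * x + c = 0 ↔ x = x₁ ∨ x = x₂ := by
  have sq_lt_discrim : (2 * a * y + b) ^ 2 < discrim a b c := by
    have hsq : (2 * a * y + b) ^ 2 = discrim a b c + 4 * a * (a * (y * y) + b * y + c) := by
      rw [discrim]
      ring
    linarith [mul_neg_of_pos_of_neg (by positivity : 0 < 4 * a) hy]
  have discrim_eq : discrim a b c = √(discrim a b c) * √(discrim a b c) :=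
    (Real.mul_self_sqrt ((sq_nonneg _).trans sq_lt_discrim.le)).symm
  obtain ⟨neg_sqrt_lt, lt_sqrt⟩ := Real.sq_lt.mp sq_lt_discrim
  have two_a_pos : 0 < 2 * a := by positivity
  refine ⟨(-b - √(discrim a b c)) / (2 * a), (-b + √(discrim a b c)) / (2 * a), ?_, ?_, fun x ↦ ?_⟩
  · rw [div_lt_iff₀ two_a_pos]
    linarith
  · rw [lt_div_iff₀ two_a_pos]
    linarith
  · rw [quadratic_eq_zero_iff ha.ne' discrim_eq, or_comm]

theorem exists_slopePolynomial_roots_of_neg {k ℓ γ y : ℝ} (hy : slopePolynomial k ℓ γ y < 0) :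
    ∃ x₁ x₂ : ℝ, x₁ < y ∧ y < x₂ ∧ ∀ x, slopePolynomial k ℓ γ x = 0 ↔ x = x₁ ∨ x = x₂ := by
  set ε := ℓ * γ ^ 2 - 1 with hε
  set A := k + 2 - (k - 2 * ℓ) * γ with hA
  have standard_form : ∀ x, slopePolynomial k ℓ γ x =
      1 * (x * x) + -((k - 2) * ε + A) * x + 2 * (k - A) * ε := fun x ↦ by
    simp only [slopePolynomial, ← hε, ← hA]
    ring
  simp only [standard_form] at hy ⊢
  exact exists_quadratic_roots_of_neg one_pos hy

theorem one_lt_mul_of_one_div_sqrt_lt {ℓ γ : ℝ} (hℓ : 1 < ℓ) (hγ : 1 / √ℓ < γ) : 1 < ℓ * γ :=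
  calc
    1 < √ℓ := by rwa [Real.lt_sqrt zero_le_one, one_pow]
    _ = ℓ * (1 / √ℓ) := by rw [mul_one_div, Real.div_sqrt]
    _ < ℓ * γ := by gcongr

theorem slope_polynomial_roots_general {k ℓ γ : ℝ} (hk : 0 < k) (hℓ : 1 < ℓ) (hℓγ : 1 < ℓ * γ) :
    (∀ s : ℝ, slopePolynomial k ℓ γ (2 * (1 + s * γ)) =
      2 * (2 * s + k) * (s - ℓ) * γ ^ 2 + 2 * (k - 2 * ℓ - (k - 2) * s) * ℓ * γ ^ 3) ∧
    (slopePolynomial k ℓ γ (2 * (1 + ℓ * γ)) = 2 * k * ℓ * γ ^ 3 * (1 - ℓ) ∧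
      2 * k * ℓ * γ ^ 3 * (1 - ℓ) < 0) ∧
    (∃ a₁ : ℝ, slopePolynomial k ℓ γ a₁ = 0 ∧ (∃ x, slopePolynomial k ℓ γ x = 0 ∧ x < a₁) ∧
      (∀ x, slopePolynomial k ℓ γ x = 0 → x ≤ a₁) ∧
      2 * (1 + ℓ * γ) < a₁ ∧ 4 < 2 * (1 + ℓ * γ)) := by
  have value := slopePolynomial_two_mul_one_add_self_mul k ℓ γ
  have ℓ_pos : 0 < ℓ := one_pos.trans hℓ
  have γ_pos : 0 < γ := pos_of_mul_pos_right (one_pos.trans hℓγ) ℓ_pos.le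
  have value_neg : 2 * k * ℓ * γ ^ 3 * (1 - ℓ) < 0 :=
    mul_neg_of_pos_of_neg (by positivity) (sub_neg.mpr hℓ)
  obtain ⟨x₁, x₂, hx₁, hx₂, root_iff⟩ :=
    exists_slopePolynomial_roots_of_neg (value.trans_lt value_neg)
  refine ⟨slopePolynomial_two_mul_one_add_mul k ℓ γ, ⟨value, value_neg⟩, x₂,
    (root_iff x₂).mpr (.inr rfl), ⟨x₁, (root_iff x₁).mpr (.inl rfl), hx₁.trans hx₂⟩,
    fun x hx ↦ ?_, hx₂, by linarith⟩
  rcases (root_iff x).mp hx with rfl | rfl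
  · exact (hx₁.trans hx₂).le
  · exact le_rfl

/-- Values of the slope polynomial `p₀` at the sonic point: the key identity, negativity at
`2(1 + ℓγ)`, and consequently `p₀` has two distinct real roots with the larger root
`a₁ > 2(1 + ℓγ) > 4`. -/
theorem slope_polynomial_roots (k : ℕ) (hk : 1 ≤ k) (ℓ γ : ℝ) (hℓ : 1 < ℓ)
    (hγ : 1 / Real.sqrt ℓ < γ)
    (ε A : ℝ)
    (hε : ε = ℓ * γ ^ 2 - 1)
    (hA : A = (k : ℝ) + 2 - ((k : ℝ) - 2 * ℓ) * γ)
    (p₀ : ℝ → ℝ)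
    (hp₀ : ∀ x : ℝ, p₀ x = x ^ 2 - (((k : ℝ) - 2) * ε + A) * x + 2 * ((k : ℝ) - A) * ε) :
    (∀ s : ℝ, p₀ (2 * (1 + s * γ))
        = 2 * (2 * s + (k : ℝ)) * (s - ℓ) * γ ^ 2
          + 2 * ((k : ℝ) - 2 * ℓ - ((k : ℝ) - 2) * s) * ℓ * γ ^ 3) ∧
    (p₀ (2 * (1 + ℓ * γ)) = 2 * (k : ℝ) * ℓ * γ ^ 3 * (1 - ℓ) ∧
      2 * (k : ℝ) * ℓ * γ ^ 3 * (1 - ℓ) < 0) ∧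
    (∃ a₁ : ℝ, p₀ a₁ = 0 ∧ (∃ x : ℝ, p₀ x = 0 ∧ x < a₁) ∧ (∀ x : ℝ, p₀ x = 0 → x ≤ a₁) ∧
      2 * (1 + ℓ * γ) < a₁ ∧ (4 : ℝ) < 2 * (1 + ℓ * γ)) := by
  obtain rfl : p₀ = slopePolynomial (k : ℝ) ℓ γ := funext fun x ↦ by rw [hp₀, hε, hA]; rfl
  exact slope_polynomial_roots_general (by exact_mod_cast hk) hℓ
    (one_lt_mul_of_one_div_sqrt_lt hℓ hγ)
end

section
/- Assume k is a positive integer, ℓ > 1 and γ > 1/√ℓ are reals; set ε := ℓγ² − 1 and A := k + 2 − (k − 2ℓ)γ. Then the quadratic λ² − ((k+2)ε + A)λ + 2kε(ε + 1) has two distinct real roots λ₋ < λ₊, both positive, and with R := λ₊/λ₋ one has (R + 1)²/R = ((k+2)ℓγ − (k − 2ℓ))²/(2kℓ(ℓγ² − 1)). -/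
open Set

/-!
For a monic quadratic with roots of ratio `R`, the quantity `(R + 1)² / R` is the squared sum of the
roots over their product. Here the sum is `γ S` and the product `γ² q`, where
`S = (k + 2)ℓγ - (k - 2ℓ)` and `q = 2kℓ(ℓγ² - 1)`, so the factors `γ²` cancel and `S² / q` remains.
The roots are real and distinct because `S = k(ℓγ - 1) + 2ℓ(γ + 1)`: by AM-GM
`S² ≥ 8kℓ(ℓγ - 1)(γ + 1)`, and `(ℓγ - 1)(γ + 1) = (ℓγ² - 1) + γ(ℓ - 1)`, so that `S² > 4q`.
-/

lemma sq_sub_add_mul_add_mul_eq_zero_iff {R : Type*} [CommRing R] [NoZeroDivisors R] {a b x : R} :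
    x ^ 2 - (a + b) * x + a * b = 0 ↔ x = a ∨ x = b := by
  have factorization : x ^ 2 - (a + b) * x + a * b = (x - a) * (x - b) := by ring
  rw [factorization, mul_eq_zero, sub_eq_zero, sub_eq_zero]

lemma div_add_one_sq_div_div {F : Type*} [Field F] {a : F} (ha : a ≠ 0) (b : F) :
    (b / a + 1) ^ 2 / (b / a) = (a + b) ^ 2 / (a * b) := by
  rw [div_add_one ha]
  field_simp
  ring

lemma exists_pos_lt_add_eq_mul_eq {t d : ℝ} (ht : 0 < t) (hd : 0 < d) (hdisc : 4 * d < t ^ 2) :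
    ∃ a b : ℝ, 0 < a ∧ a < b ∧ a + b = t ∧ a * b = d := by
  have sqrt_pos : 0 < √(t ^ 2 - 4 * d) := Real.sqrt_pos.mpr (sub_pos.mpr hdisc)
  have sqrt_lt : √(t ^ 2 - 4 * d) < t := (Real.sqrt_lt' ht).mpr (by linarith)
  have sq_sqrt : √(t ^ 2 - 4 * d) ^ 2 = t ^ 2 - 4 * d := Real.sq_sqrt (sub_pos.mpr hdisc).le
  refine ⟨(t - √(t ^ 2 - 4 * d)) / 2, (t + √(t ^ 2 - 4 * d)) / 2, ?_, ?_, ?_, ?_⟩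
  · linarith
  · linarith
  · ring
  · linear_combination -sq_sqrt / 4

lemma exists_pos_lt_roots_and_ratio_eq {t d : ℝ} (ht : 0 < t) (hd : 0 < d)
    (hdisc : 4 * d < t ^ 2) :
    ∃ a b : ℝ, 0 < a ∧ a < b ∧ (∀ x, x ^ 2 - t * x + d = 0 ↔ x = a ∨ x = b) ∧
      (b / a + 1) ^ 2 / (b / a) = t ^ 2 / d := by
  obtain ⟨a, b, ha, hab, rfl, rfl⟩ := exists_pos_lt_add_eq_mul_eq ht hd hdisc
  exact ⟨a, b, ha, hab, fun _ => sq_sub_add_mul_add_mul_eq_zero_iff,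
    div_add_one_sq_div_div ha.ne' b⟩

lemma one_lt_mul_sq_of_one_div_sqrt_lt {ℓ γ : ℝ} (hℓ : 0 < ℓ) (hγ : 1 / √ℓ < γ) :
    1 < ℓ * γ ^ 2 := by
  have sq_lt_sq : (1 / √ℓ) ^ 2 < γ ^ 2 := pow_lt_pow_left₀ hγ (by positivity) two_ne_zero
  rwa [div_pow, one_pow, Real.sq_sqrt hℓ.le, div_lt_iff₀' hℓ] at sq_lt_sq

/-- The trace of the linearization at the sonic point divided by `γ`. -/
def reducedTrace {R : Type*} [CommRing R] (k ℓ γ : R) : R :=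
  (k + 2) * ℓ * γ - (k - 2 * ℓ)

/-- The determinant of the linearization at the sonic point divided by `γ ^ 2`. -/
def reducedDet {R : Type*} [CommRing R] (k ℓ γ : R) : R :=
  2 * k * ℓ * (ℓ * γ ^ 2 - 1)

section CommRing

variable {R : Type*} [CommRing R] (k ℓ γ : R)

lemma trace_eq_mul_reducedTrace :
    (k + 2) * (ℓ * γ ^ 2 - 1) + (k + 2 - (k - 2 * ℓ) * γ) = γ * reducedTrace k ℓ γ := by
  rw [reducedTrace]
  ring

lemma det_eq_sq_mul_reducedDet :
    2 * k * (ℓ * γ ^ 2 - 1) * (ℓ * γ ^ 2 - 1 + 1) = γ ^ 2 * reducedDet k ℓ γ := by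
  rw [reducedDet]
  ring

lemma reducedTrace_eq_add :
    reducedTrace k ℓ γ = k * (ℓ * γ - 1) + 2 * (ℓ * (γ + 1)) := by
  rw [reducedTrace]
  ring

end CommRing

section OrderedRing

variable {R : Type*} [CommRing R] [LinearOrder R] [IsStrictOrderedRing R] {k ℓ γ : R}

lemma one_lt_mul_of_one_lt_mul_sq (hℓ : 1 ≤ ℓ) (hγ : 0 ≤ γ) (h : 1 < ℓ * γ ^ 2) : 1 < ℓ * γ := by
  have one_lt_sq : 1 < (ℓ * γ) ^ 2 := calc
    1 < ℓ * (ℓ * γ ^ 2) := one_lt_mul_of_le_of_lt hℓ h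
    _ = (ℓ * γ) ^ 2 := by ring
  exact (one_lt_sq_iff₀ (by positivity)).mp one_lt_sq

lemma reducedTrace_pos (hk : 0 ≤ k) (hℓ : 0 < ℓ) (hγ : 0 ≤ γ) (h : 1 ≤ ℓ * γ) :
    0 < reducedTrace k ℓ γ := by
  rw [reducedTrace_eq_add]
  exact add_pos_of_nonneg_of_pos (mul_nonneg hk (sub_nonneg.mpr h)) (by positivity)

lemma reducedDet_pos (hk : 0 < k) (hℓ : 0 < ℓ) (h : 1 < ℓ * γ ^ 2) : 0 < reducedDet k ℓ γ :=
  mul_pos (mul_pos (mul_pos two_pos hk) hℓ) (sub_pos.mpr h)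

lemma four_mul_reducedDet_lt_reducedTrace_sq (hk : 0 < k) (hℓ : 1 < ℓ) (hγ : 0 < γ) :
    4 * reducedDet k ℓ γ < reducedTrace k ℓ γ ^ 2 := by
  have coeff_pos : 0 < 8 * k * ℓ := mul_pos (by positivity) (zero_lt_one.trans hℓ)
  have lt_mul : ℓ * γ ^ 2 - 1 < (ℓ * γ - 1) * (γ + 1) := by
    linear_combination mul_pos hγ (sub_pos.mpr hℓ)
  calc 4 * reducedDet k ℓ γ
    _ = 8 * k * ℓ * (ℓ * γ ^ 2 - 1) := by rw [reducedDet]; ring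
    _ < 8 * k * ℓ * ((ℓ * γ - 1) * (γ + 1)) := mul_lt_mul_of_pos_left lt_mul coeff_pos
    _ = 4 * (k * (ℓ * γ - 1)) * (2 * (ℓ * (γ + 1))) := by ring
    _ ≤ (k * (ℓ * γ - 1) + 2 * (ℓ * (γ + 1))) ^ 2 := four_mul_le_sq_add _ _
    _ = reducedTrace k ℓ γ ^ 2 := by rw [reducedTrace_eq_add]

end OrderedRing

theorem eigenvalue_ratio_identity_general {k ℓ γ ε A : ℝ} (hk : 0 < k) (hℓ : 1 < ℓ)
    (hγ : 1 / √ℓ < γ) (hε : ε = ℓ * γ ^ 2 - 1) (hA : A = k + 2 - (k - 2 * ℓ) * γ) :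
    ∃ lm lp : ℝ, 0 < lm ∧ lm < lp ∧
      lm ^ 2 - ((k + 2) * ε + A) * lm + 2 * k * ε * (ε + 1) = 0 ∧
      lp ^ 2 - ((k + 2) * ε + A) * lp + 2 * k * ε * (ε + 1) = 0 ∧
      (∀ x : ℝ, x ^ 2 - ((k + 2) * ε + A) * x + 2 * k * ε * (ε + 1) = 0 → x = lm ∨ x = lp) ∧
      (lp / lm + 1) ^ 2 / (lp / lm)
        = ((k + 2) * ℓ * γ - (k - 2 * ℓ)) ^ 2 / (2 * k * ℓ * (ℓ * γ ^ 2 - 1)) := by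
  have hℓ₀ : 0 < ℓ := zero_lt_one.trans hℓ
  have hγ₀ : 0 < γ := (one_div_pos.mpr (Real.sqrt_pos.mpr hℓ₀)).trans hγ
  have one_lt_mul_sq : 1 < ℓ * γ ^ 2 := one_lt_mul_sq_of_one_div_sqrt_lt hℓ₀ hγ
  have one_lt_mul : 1 < ℓ * γ := one_lt_mul_of_one_lt_mul_sq hℓ.le hγ₀.le one_lt_mul_sq
  have trace_pos : 0 < γ * reducedTrace k ℓ γ :=
    mul_pos hγ₀ (reducedTrace_pos hk.le hℓ₀ hγ₀.le one_lt_mul.le)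
  have det_pos : 0 < γ ^ 2 * reducedDet k ℓ γ :=
    mul_pos (pow_pos hγ₀ 2) (reducedDet_pos hk hℓ₀ one_lt_mul_sq)
  have four_det_lt : 4 * (γ ^ 2 * reducedDet k ℓ γ) < (γ * reducedTrace k ℓ γ) ^ 2 := by
    linear_combination γ ^ 2 * four_mul_reducedDet_lt_reducedTrace_sq hk hℓ hγ₀
  obtain ⟨lm, lp, lm_pos, lm_lt_lp, root_iff, ratio_eq⟩ :=
    exists_pos_lt_roots_and_ratio_eq trace_pos det_pos four_det_lt
  rw [mul_pow, mul_div_mul_left _ _ (pow_ne_zero 2 hγ₀.ne')] at ratio_eq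
  rw [hε, hA, trace_eq_mul_reducedTrace, det_eq_sq_mul_reducedDet]
  exact ⟨lm, lp, lm_pos, lm_lt_lp, (root_iff lm).mpr (.inl rfl), (root_iff lp).mpr (.inr rfl),
    fun x => (root_iff x).mp, ratio_eq⟩

/-- The characteristic polynomial of the linearization at the sonic point has two distinct
positive roots `λ₋ < λ₊`, and the ratio `R = λ₊/λ₋` satisfies the stated identity. -/
theorem eigenvalue_ratio_identity (k : ℕ) (hk : 1 ≤ k) (ℓ γ : ℝ) (hℓ : 1 < ℓ)
    (hγ : 1 / Real.sqrt ℓ < γ)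
    (ε A : ℝ)
    (hε : ε = ℓ * γ ^ 2 - 1)
    (hA : A = (k : ℝ) + 2 - ((k : ℝ) - 2 * ℓ) * γ) :
    ∃ lm lp : ℝ, 0 < lm ∧ lm < lp ∧
      lm ^ 2 - (((k : ℝ) + 2) * ε + A) * lm + 2 * (k : ℝ) * ε * (ε + 1) = 0 ∧
      lp ^ 2 - (((k : ℝ) + 2) * ε + A) * lp + 2 * (k : ℝ) * ε * (ε + 1) = 0 ∧
      (∀ x : ℝ, x ^ 2 - (((k : ℝ) + 2) * ε + A) * x + 2 * (k : ℝ) * ε * (ε + 1) = 0 →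
        x = lm ∨ x = lp) ∧
      (lp / lm + 1) ^ 2 / (lp / lm)
        = (((k : ℝ) + 2) * ℓ * γ - ((k : ℝ) - 2 * ℓ)) ^ 2 / (2 * (k : ℝ) * ℓ * (ℓ * γ ^ 2 - 1)) := by
  exact eigenvalue_ratio_identity_general (Nat.cast_pos.mpr hk) hℓ hγ hε hA
end

section
/- Under the standard sonic-point setup, put B₀ := (k−2)a₁ + 2A − 4k and f(z) := −ε − Az + Bz². Then: B₀ > 0; f(−ε/a₁)·a₁²/ε² = −B₀ + 1 − ℓ, which is negative; the quantity (ℓ−1)R + B₀R − ε·B₀/δ is positive; and (k−1)a₁² − (B − A + 2k)a₁ + 2(k − B)ε = ((ℓ−1)R + B₀R − ε·B₀/δ)·δ, so that when R ≠ 2 the coefficient a₂ := ((k−1)a₁² − (B − A + 2k)a₁ + 2(k − B)ε)/((R−2)δ) satisfies (R−2)a₂ = (ℓ−1)R + B₀R − ε·B₀/δ > 0. -/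
open Set

/-!
Put `s = γ√ℓ > 1`, so that `ε = s² - 1`. The value `A₀ = k + 2 - (k - 2)s` is what `A` becomes at
`ℓ = 1` for this `s`; there `p₀` has the roots `2(s + 1)` and `A₀ + k(s - 1)`. For `ℓ > 1` one has
`A > A₀`, and `p₀` is negative at `2(s + 1)` and at `A + k(s - 1)`, so its larger root `a₁` exceeds
both. Since `εB₀ = a₁(a₁ - A) - 2kε` by the equation `p₀(a₁) = 0`, it follows that
`εB₀ > 2(s + 1) · k(s - 1) - 2kε = 0`. The remaining claims are identities modulo `p₀(a₁) = 0`
whose right-hand sides are visibly positive.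
-/

section MonicQuadratic

variable {b c t : ℝ}

/-- The larger root of `x ^ 2 - b * x + c`. When the discriminant is negative, `Real.sqrt` returns
`0` and this is the vertex `b / 2`. -/
noncomputable def largerRoot (b c : ℝ) : ℝ :=
  (b + √(b ^ 2 - 4 * c)) / 2

theorem largerRoot_isRoot (h : 0 ≤ b ^ 2 - 4 * c) :
    largerRoot b c ^ 2 - b * largerRoot b c + c = 0 := by
  unfold largerRoot
  linear_combination Real.sq_sqrt h / 4

theorem sq_lt_discrim_of_quadratic_neg (h : t ^ 2 - b * t + c < 0) :
    (2 * t - b) ^ 2 < b ^ 2 - 4 * c := by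
  linarith

theorem lt_largerRoot_of_quadratic_neg (h : t ^ 2 - b * t + c < 0) : t < largerRoot b c := by
  have := Real.lt_sqrt_of_sq_lt (sq_lt_discrim_of_quadratic_neg h)
  unfold largerRoot
  linarith

end MonicQuadratic

section SonicPoint

variable {k ℓ γ ε A s x b δ : ℝ}

/-- The quadratic `p₀` of the sonic-point setup. -/
def sonicPoly (k A ε x : ℝ) : ℝ :=
  x ^ 2 - ((k - 2) * ε + A) * x + 2 * (k - A) * ε

/-- The root `a₁` of `p₀` selected in the sonic-point setup. -/
noncomputable def sonicRoot (k A ε : ℝ) : ℝ :=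
  largerRoot ((k - 2) * ε + A) (2 * (k - A) * ε)

/-- The quantity `B₀`, as a function of the root `x = a₁`. -/
def sonicB₀ (k A x : ℝ) : ℝ :=
  (k - 2) * x + 2 * A - 4 * k

theorem sub_mul_mul_sqrt_lt (hk : 0 ≤ k) (hℓ : 1 < ℓ) (hγ : 0 < γ) :
    k + 2 - (k - 2) * (γ * √ℓ) < k + 2 - (k - 2 * ℓ) * γ := by
  have hr : 1 < √ℓ := Real.lt_sqrt_of_sq_lt (by simpa using hℓ)
  have hpos : 0 < γ * (√ℓ - 1) * (2 * √ℓ + k) :=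
    mul_pos (mul_pos hγ (sub_pos.mpr hr)) (by positivity)
  have hfactor : (k + 2 - (k - 2 * ℓ) * γ) - (k + 2 - (k - 2) * (γ * √ℓ))
      = γ * (√ℓ - 1) * (2 * √ℓ + k) := by
    linear_combination (-2 * γ) * Real.sq_sqrt (zero_le_one.trans hℓ.le)
  linarith

theorem exists_sonic_parameter (hk : 0 ≤ k) (hℓ : 1 < ℓ) (hγ : 1 / √ℓ < γ) :
    ∃ s, 1 < s ∧ ℓ * γ ^ 2 - 1 = s ^ 2 - 1 ∧
      k + 2 - (k - 2) * s < k + 2 - (k - 2 * ℓ) * γ := by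
  have hℓ₀ : 0 < ℓ := one_pos.trans hℓ
  have hγ₀ : 0 < γ := lt_trans (by positivity) hγ
  refine ⟨γ * √ℓ, (div_lt_iff₀ (Real.sqrt_pos.mpr hℓ₀)).mp hγ, ?_,
    sub_mul_mul_sqrt_lt hk hℓ hγ₀⟩
  rw [mul_pow, Real.sq_sqrt hℓ₀.le, mul_comm]

theorem sonicRoot_eq : sonicRoot k A ε
    = (((k - 2) * ε + A) + √(((k - 2) * ε + A) ^ 2 - 8 * (k - A) * ε)) / 2 := by
  rw [sonicRoot, largerRoot, show 4 * (2 * (k - A) * ε) = 8 * (k - A) * ε by ring]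

theorem sonicPoly_two_mul_add_one_neg (hs : 0 < s) (hA : k + 2 - (k - 2) * s < A) :
    sonicPoly k A (s ^ 2 - 1) (2 * (s + 1)) < 0 := by
  have hfactor : sonicPoly k A (s ^ 2 - 1) (2 * (s + 1))
      = -(2 * s * (s + 1) * (A - (k + 2 - (k - 2) * s))) := by
    unfold sonicPoly
    ring
  rw [hfactor, neg_lt_zero]
  exact mul_pos (by positivity) (sub_pos.mpr hA)

theorem sonicPoly_add_mul_sub_one_neg (hk : 0 < k) (hs : 1 < s)
    (hA : k + 2 - (k - 2) * s < A) :
    sonicPoly k A (s ^ 2 - 1) (A + k * (s - 1)) < 0 := by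
  have hfactor : sonicPoly k A (s ^ 2 - 1) (A + k * (s - 1))
      = -(k * s * (s - 1) * (A - (k + 2 - (k - 2) * s))) := by
    unfold sonicPoly
    ring
  rw [hfactor, neg_lt_zero]
  exact mul_pos (mul_pos (by positivity) (sub_pos.mpr hs)) (sub_pos.mpr hA)

theorem two_mul_add_one_lt_sonicRoot (hs : 0 < s) (hA : k + 2 - (k - 2) * s < A) :
    2 * (s + 1) < sonicRoot k A (s ^ 2 - 1) :=
  lt_largerRoot_of_quadratic_neg (sonicPoly_two_mul_add_one_neg hs hA)

theorem add_mul_sub_one_lt_sonicRoot (hk : 0 < k) (hs : 1 < s)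
    (hA : k + 2 - (k - 2) * s < A) :
    A + k * (s - 1) < sonicRoot k A (s ^ 2 - 1) :=
  lt_largerRoot_of_quadratic_neg (sonicPoly_add_mul_sub_one_neg hk hs hA)

theorem sonicPoly_sonicRoot (hs : 0 < s) (hA : k + 2 - (k - 2) * s < A) :
    sonicPoly k A (s ^ 2 - 1) (sonicRoot k A (s ^ 2 - 1)) = 0 :=
  largerRoot_isRoot ((sq_nonneg _).trans
    (sq_lt_discrim_of_quadratic_neg (sonicPoly_two_mul_add_one_neg hs hA)).le)

theorem mul_sonicB₀_of_isRoot (hx : sonicPoly k A ε x = 0) :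
    ε * sonicB₀ k A x = x * (x - A) - 2 * k * ε := by
  unfold sonicPoly at hx
  unfold sonicB₀
  linear_combination -hx

theorem sonicB₀_sonicRoot_pos (hk : 0 < k) (hs : 1 < s) (hA : k + 2 - (k - 2) * s < A) :
    0 < sonicB₀ k A (sonicRoot k A (s ^ 2 - 1)) := by
  have hs₀ : 0 < s := one_pos.trans hs
  have hε : 0 < s ^ 2 - 1 := sub_pos.mpr (one_lt_pow₀ hs two_ne_zero)
  have hroot := two_mul_add_one_lt_sonicRoot hs₀ hA
  have hroot_sub := lt_sub_iff_add_lt'.mpr (add_mul_sub_one_lt_sonicRoot hk hs hA)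
  refine pos_of_mul_pos_right ?_ hε.le
  rw [mul_sonicB₀_of_isRoot (sonicPoly_sonicRoot hs₀ hA), sub_pos]
  calc 2 * k * (s ^ 2 - 1) = 2 * (s + 1) * (k * (s - 1)) := by ring
    _ < sonicRoot k A (s ^ 2 - 1) * (sonicRoot k A (s ^ 2 - 1) - A) :=
      mul_lt_mul'' hroot hroot_sub (by positivity) (mul_nonneg hk.le (sub_nonneg.mpr hs.le))

theorem sub_mul_add_of_isRoot (hx : sonicPoly k A ε x = 0) :
    (A + k * ε - x) * (x + 2 * ε) = 2 * k * ε * (1 + ε) := by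
  unfold sonicPoly at hx
  linear_combination -hx

theorem sub_pos_of_isRoot (hk : 0 < k) (hε : 0 < ε) (hx₀ : 0 < x)
    (hx : sonicPoly k A ε x = 0) : 0 < A + k * ε - x := by
  refine pos_of_mul_pos_left ?_ (show 0 ≤ x + 2 * ε by positivity)
  rw [sub_mul_add_of_isRoot hx]
  positivity

theorem quadratic_neg_div_of_isRoot (hε : ε ≠ 0) (hx₀ : x ≠ 0) (hx : sonicPoly k A ε x = 0) :
    (-ε - A * (-ε / x) + (2 * k + 1 - ℓ) * (-ε / x) ^ 2) * x ^ 2 / ε ^ 2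
      = -sonicB₀ k A x + 1 - ℓ := by
  field_simp
  linear_combination mul_sonicB₀_of_isRoot hx

theorem a₂_numerator_of_isRoot (hx : sonicPoly k A ε x = 0) :
    (k - 1) * x ^ 2 - (2 * k + 1 - ℓ - A + 2 * k) * x + 2 * (k - (2 * k + 1 - ℓ)) * ε
      = (ℓ - 1) * (x + 2 * ε) + sonicB₀ k A x * (x + ε) := by
  have hB₀ := mul_sonicB₀_of_isRoot hx
  unfold sonicB₀ at hB₀ ⊢
  linear_combination -hB₀

theorem a₂_quotient_mul (hδ : δ ≠ 0) :
    ((ℓ - 1) * ((x + 2 * ε) / δ) + b * ((x + 2 * ε) / δ) - ε * b / δ) * δ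
      = (ℓ - 1) * (x + 2 * ε) + b * (x + ε) := by
  field_simp
  ring

theorem a₂_quotient_pos (hℓ : 1 < ℓ) (hε : 0 < ε) (hx : 0 < x) (hδ : 0 < δ) (hb : 0 < b) :
    0 < (ℓ - 1) * ((x + 2 * ε) / δ) + b * ((x + 2 * ε) / δ) - ε * b / δ := by
  refine pos_of_mul_pos_left ?_ hδ.le
  rw [a₂_quotient_mul hδ.ne']
  exact add_pos (mul_pos (sub_pos.mpr hℓ) (by positivity)) (by positivity)

theorem a2_positive_general
    (k ℓ γ ε A B a₁ δ R : ℝ) (hk : 0 < k)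
    (hℓ : 1 < ℓ) (hγ : 1 / Real.sqrt ℓ < γ)
    (hε : ε = ℓ * γ ^ 2 - 1)
    (hA : A = k + 2 - (k - 2 * ℓ) * γ)
    (hB : B = 2 * k + 1 - ℓ)
    (ha₁ : a₁ = (((k - 2) * ε + A)
        + Real.sqrt (((k - 2) * ε + A) ^ 2 - 8 * (k - A) * ε)) / 2)
    (hδ : δ = A + k * ε - a₁)
    (hR : R = (a₁ + 2 * ε) / δ)
    (B₀ a₂ : ℝ)
    (hB₀ : B₀ = (k - 2) * a₁ + 2 * A - 4 * k)
    (ha₂ : a₂ = ((k - 1) * a₁ ^ 2 - (B - A + 2 * k) * a₁ + 2 * (k - B) * ε)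
        / ((R - 2) * δ)) :
    0 < B₀ ∧
    (-ε - A * (-ε / a₁) + B * (-ε / a₁) ^ 2) * a₁ ^ 2 / ε ^ 2 = -B₀ + 1 - ℓ ∧
    -B₀ + 1 - ℓ < 0 ∧
    0 < (ℓ - 1) * R + B₀ * R - ε * B₀ / δ ∧
    (k - 1) * a₁ ^ 2 - (B - A + 2 * k) * a₁ + 2 * (k - B) * ε
      = ((ℓ - 1) * R + B₀ * R - ε * B₀ / δ) * δ ∧
    (R ≠ 2 →
      (R - 2) * a₂ = (ℓ - 1) * R + B₀ * R - ε * B₀ / δ ∧ 0 < (R - 2) * a₂) := by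
  obtain ⟨s, hs, hεs, hAs⟩ := exists_sonic_parameter hk.le hℓ hγ
  have hs₀ : 0 < s := one_pos.trans hs
  rw [← hA] at hAs
  rw [← hε] at hεs
  have hεpos : 0 < ε := hεs ▸ sub_pos.mpr (one_lt_pow₀ hs two_ne_zero)
  have ha₁_eq : a₁ = sonicRoot k A (s ^ 2 - 1) := by rw [ha₁, ← hεs, sonicRoot_eq]
  have hroot : sonicPoly k A ε a₁ = 0 := by
    rw [ha₁_eq, hεs]
    exact sonicPoly_sonicRoot hs₀ hAs
  have ha₁pos : 0 < a₁ := by linarith [ha₁_eq ▸ two_mul_add_one_lt_sonicRoot hs₀ hAs]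
  have hδpos : 0 < δ := hδ ▸ sub_pos_of_isRoot hk hεpos ha₁pos hroot
  have hB₀pos : 0 < B₀ := by
    rw [hB₀, ha₁_eq]
    exact sonicB₀_sonicRoot_pos hk hs hAs
  have hnum : (k - 1) * a₁ ^ 2 - (B - A + 2 * k) * a₁ + 2 * (k - B) * ε
      = ((ℓ - 1) * R + B₀ * R - ε * B₀ / δ) * δ := by
    rw [hB, hB₀, hR, a₂_quotient_mul hδpos.ne']
    exact a₂_numerator_of_isRoot hroot
  have hpos : 0 < (ℓ - 1) * R + B₀ * R - ε * B₀ / δ :=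
    hR ▸ a₂_quotient_pos hℓ hεpos ha₁pos hδpos hB₀pos
  refine ⟨hB₀pos, ?_, by linarith, hpos, hnum, fun hR2 ↦ ?_⟩
  · rw [hB, hB₀]
    exact quadratic_neg_div_of_isRoot hεpos.ne' ha₁pos.ne' hroot
  · have ha₂_eq : (R - 2) * a₂ = (ℓ - 1) * R + B₀ * R - ε * B₀ / δ := by
      rw [ha₂, hnum, mul_div_mul_right _ _ hδpos.ne', mul_div_cancel₀ _ (sub_ne_zero.mpr hR2)]
    exact ⟨ha₂_eq, ha₂_eq ▸ hpos⟩

end SonicPoint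

/-- Positivity of `B₀` and the formula for the second Taylor coefficient `a₂` at the
sonic point. -/
theorem a2_positive
    (k : ℕ) (hk : 1 ≤ k) (ℓ γ ε A B a₁ δ R : ℝ)
    (hℓ : 1 < ℓ) (hγ : 1 / Real.sqrt ℓ < γ)
    (hε : ε = ℓ * γ ^ 2 - 1) (hεpos : 0 < ε)
    (hA : A = (k : ℝ) + 2 - ((k : ℝ) - 2 * ℓ) * γ)
    (hB : B = 2 * (k : ℝ) + 1 - ℓ)
    (hdisc : 0 < (((k : ℝ) - 2) * ε + A) ^ 2 - 8 * ((k : ℝ) - A) * ε)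
    (ha₁ : a₁ = ((((k : ℝ) - 2) * ε + A)
        + Real.sqrt ((((k : ℝ) - 2) * ε + A) ^ 2 - 8 * ((k : ℝ) - A) * ε)) / 2)
    (hδ : δ = A + (k : ℝ) * ε - a₁) (hδpos : 0 < δ)
    (hR : R = (a₁ + 2 * ε) / δ) (hR1 : 1 < R)
    (hRδ : R * δ = a₁ + 2 * ε)
    (hR1δ : (R + 1) * δ = ((k : ℝ) + 2) * ε + A)
    (hRδ2 : R * δ ^ 2 = 2 * (k : ℝ) * ε * (1 + ε))
    (B₀ a₂ : ℝ)
    (hB₀ : B₀ = ((k : ℝ) - 2) * a₁ + 2 * A - 4 * (k : ℝ))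
    (ha₂ : a₂ = (((k : ℝ) - 1) * a₁ ^ 2 - (B - A + 2 * (k : ℝ)) * a₁ + 2 * ((k : ℝ) - B) * ε)
        / ((R - 2) * δ)) :
    0 < B₀ ∧
    (-ε - A * (-ε / a₁) + B * (-ε / a₁) ^ 2) * a₁ ^ 2 / ε ^ 2 = -B₀ + 1 - ℓ ∧
    -B₀ + 1 - ℓ < 0 ∧
    0 < (ℓ - 1) * R + B₀ * R - ε * B₀ / δ ∧
    ((k : ℝ) - 1) * a₁ ^ 2 - (B - A + 2 * (k : ℝ)) * a₁ + 2 * ((k : ℝ) - B) * ε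
      = ((ℓ - 1) * R + B₀ * R - ε * B₀ / δ) * δ ∧
    (R ≠ 2 →
      (R - 2) * a₂ = (ℓ - 1) * R + B₀ * R - ε * B₀ / δ ∧ 0 < (R - 2) * a₂) :=
  a2_positive_general k ℓ γ ε A B a₁ δ R (Nat.cast_pos.mpr hk) hℓ hγ hε hA hB ha₁ hδ hR B₀ a₂
    hB₀ ha₂
end

section
/- Under the standard sonic-point setup with higher Taylor coefficients, assume R ≠ 2. Then (R−2)a₂ = ((k−3)R + 1)a₁ + 3AR − (2k + B)R, (R−2)B₁ = ((k+5)R − 6k)a₁ − 6AR + 2kR + 4k + 4B, and (R−2)B₂ = −((k−15)R + 8k + 5)a₁ − (16R − 2)A + 2(4k + B)R + 4k + 6B. -/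
open Set

/-!
Substituting `δ = A + kε - a₁` and `Rδ = a₁ + 2ε` into `δ` times the claimed value of `(R-2)a₂`
produces a quadratic polynomial in `a₁`, which differs from the numerator of `a₂` by exactly
`3p₀(a₁) = 0`. Since `B₁` and `B₂` are affine in `a₂`, their formulas follow from that of `a₂`.
-/

section CommRing

variable {S : Type*} [CommRing S]

/-- The quadratic `p₀`, one of whose roots is the first Taylor coefficient `a₁` at the sonic point,
as a function over an arbitrary commutative ring. -/
def sonicQuadratic (k ε A x : S) : S :=
  x ^ 2 - ((k - 2) * ε + A) * x + 2 * (k - A) * ε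

/-- The numerator of the second Taylor coefficient `a₂`, whose denominator is `(R - 2) * δ`,
as a function of the first coefficient `x = a₁`. -/
def secondTaylorNumerator (k ε A B x : S) : S :=
  (k - 1) * x ^ 2 - (B - A + 2 * k) * x + 2 * (k - B) * ε

theorem secondTaylorNumerator_eq_three_mul_sonicQuadratic_add (k ε A B x : S) :
    secondTaylorNumerator k ε A B x = 3 * sonicQuadratic k ε A x +
      (((k - 3) * x + 3 * A - (2 * k + B)) * (x + 2 * ε) + x * (A + k * ε - x)) := by
  unfold secondTaylorNumerator sonicQuadratic
  ring

theorem secondTaylorNumerator_eq_mul_of_sonicQuadratic_eq_zero {k ε A B a₁ δ R : S}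
    (ha₁ : sonicQuadratic k ε A a₁ = 0) (hδ : δ = A + k * ε - a₁) (hRδ : R * δ = a₁ + 2 * ε) :
    secondTaylorNumerator k ε A B a₁ =
      (((k - 3) * R + 1) * a₁ + 3 * A * R - (2 * k + B) * R) * δ := by
  rw [secondTaylorNumerator_eq_three_mul_sonicQuadratic_add, ha₁, ← hRδ, ← hδ]
  ring

end CommRing

section Field

variable {K : Type*} [Field K]

theorem sonicQuadratic_add_div_two_eq_zero [NeZero (2 : K)] {k ε A s : K}
    (hs : s ^ 2 = ((k - 2) * ε + A) ^ 2 - 8 * (k - A) * ε) :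
    sonicQuadratic k ε A (((k - 2) * ε + A + s) / 2) = 0 := by
  unfold sonicQuadratic
  field_simp
  linear_combination hs

theorem taylor_coefficient_identities_general {k ε A B a₁ δ R a₂ B₁ B₂ : K}
    (ha₁ : sonicQuadratic k ε A a₁ = 0)
    (hδ : δ = A + k * ε - a₁) (hδ0 : δ ≠ 0)
    (hR : R = (a₁ + 2 * ε) / δ)
    (ha₂ : a₂ = secondTaylorNumerator k ε A B a₁ / ((R - 2) * δ))
    (hB₁ : B₁ = (3 * k - 1) * a₁ - 2 * a₂ - 2 * (k + B))
    (hB₂ : B₂ = -5 * a₂ + 4 * k * a₁ - (2 * k + A + 3 * B))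
    (hR2 : R ≠ 2) :
    (R - 2) * a₂ = ((k - 3) * R + 1) * a₁ + 3 * A * R - (2 * k + B) * R ∧
    (R - 2) * B₁ = ((k + 5) * R - 6 * k) * a₁ - 6 * A * R + 2 * k * R + 4 * k + 4 * B ∧
    (R - 2) * B₂ = -(((k - 15) * R + 8 * k + 5) * a₁) - (16 * R - 2) * A
        + 2 * (4 * k + B) * R + 4 * k + 6 * B := by
  have hRδ : R * δ = a₁ + 2 * ε := (eq_div_iff hδ0).mp hR
  have ha₂_eq : (R - 2) * a₂ = ((k - 3) * R + 1) * a₁ + 3 * A * R - (2 * k + B) * R :=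
    calc
      (R - 2) * a₂ = secondTaylorNumerator k ε A B a₁ / δ := by
        rw [ha₂, ← mul_div_assoc, mul_div_mul_left _ _ (sub_ne_zero.mpr hR2)]
      _ = _ := by
        rw [secondTaylorNumerator_eq_mul_of_sonicQuadratic_eq_zero ha₁ hδ hRδ,
          mul_div_cancel_right₀ _ hδ0]
  refine ⟨ha₂_eq, ?_, ?_⟩
  · linear_combination (R - 2) * hB₁ - 2 * ha₂_eq
  · linear_combination (R - 2) * hB₂ - 5 * ha₂_eq

end Field

/-- Explicit expressions for `(R-2)a₂`, `(R-2)B₁` and `(R-2)B₂` in terms of `a₁`, `A`, `B`. -/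
theorem taylor_coefficient_identities
    (k : ℕ) (hk : 1 ≤ k) (ℓ γ ε A B a₁ δ R : ℝ)
    (hℓ : 1 < ℓ) (hγ : 1 / Real.sqrt ℓ < γ)
    (hε : ε = ℓ * γ ^ 2 - 1) (hεpos : 0 < ε)
    (hA : A = (k : ℝ) + 2 - ((k : ℝ) - 2 * ℓ) * γ)
    (hB : B = 2 * (k : ℝ) + 1 - ℓ)
    (hdisc : 0 < (((k : ℝ) - 2) * ε + A) ^ 2 - 8 * ((k : ℝ) - A) * ε)
    (ha₁ : a₁ = ((((k : ℝ) - 2) * ε + A)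
        + Real.sqrt ((((k : ℝ) - 2) * ε + A) ^ 2 - 8 * ((k : ℝ) - A) * ε)) / 2)
    (hδ : δ = A + (k : ℝ) * ε - a₁) (hδpos : 0 < δ)
    (hR : R = (a₁ + 2 * ε) / δ) (hR1 : 1 < R)
    (hRδ : R * δ = a₁ + 2 * ε)
    (hR1δ : (R + 1) * δ = ((k : ℝ) + 2) * ε + A)
    (hRδ2 : R * δ ^ 2 = 2 * (k : ℝ) * ε * (1 + ε))
    (a₂ B₁ B₂ : ℝ)
    (ha₂ : a₂ = (((k : ℝ) - 1) * a₁ ^ 2 - (B - A + 2 * (k : ℝ)) * a₁ + 2 * ((k : ℝ) - B) * ε)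
        / ((R - 2) * δ))
    (hB₁ : B₁ = (3 * (k : ℝ) - 1) * a₁ - 2 * a₂ - 2 * ((k : ℝ) + B))
    (hB₂ : B₂ = -5 * a₂ + 4 * (k : ℝ) * a₁ - (2 * (k : ℝ) + A + 3 * B))
    (hR2 : R ≠ 2) :
    (R - 2) * a₂ = (((k : ℝ) - 3) * R + 1) * a₁ + 3 * A * R - (2 * (k : ℝ) + B) * R ∧
    (R - 2) * B₁ = (((k : ℝ) + 5) * R - 6 * (k : ℝ)) * a₁ - 6 * A * R
        + 2 * (k : ℝ) * R + 4 * (k : ℝ) + 4 * B ∧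
    (R - 2) * B₂ = -((((k : ℝ) - 15) * R + 8 * (k : ℝ) + 5) * a₁) - (16 * R - 2) * A
        + 2 * (4 * (k : ℝ) + B) * R + 4 * (k : ℝ) + 6 * B := by
  have hroot : sonicQuadratic (k : ℝ) ε A a₁ = 0 :=
    ha₁ ▸ sonicQuadratic_add_div_two_eq_zero (Real.sq_sqrt hdisc.le)
  exact taylor_coefficient_identities_general hroot hδ hδpos.ne' hR ha₂ hB₁ hB₂ hR2
end

section
/- Under the standard sonic-point setup with higher Taylor coefficients, assume k = 1 or k = 2, and 3 ≤ R ≤ 4. Then (R−2)·B₁ > (R−3)·(kR−2)·δ. -/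
open Set

/-!
In the variable `u = Rδ/ε` the sonic-point relations become `δu = 2k(1+ε)` and `a₁ = ε(u-2)`.
Eliminating `γ` and `a₂` with them gives the exact formula
`(R-2)B₁ - (R-3)(kR-2)δ = (ε/R) Q(u) + k²/ℓ` for an explicit quadratic `Q` with coefficients
in `k` and `R`. Moreover `u² = 2kR(1+1/ε) > 2kR`, and `Q` is positive there: the linear term is
controlled by `2wu ≤ u² + w²` for the arithmetic mean `w` of `R` and `2k`, which is close to the
geometric mean `√(2kR)`.
-/

lemma quadratic_ge_of_le_sq {a b c s u w : ℝ} (hb : 0 ≤ b) (hab : b ≤ 2 * w * a)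
    (hu : s ≤ u ^ 2) :
    (2 * w * a - b) * s - b * w ^ 2 + 2 * w * c ≤ 2 * w * (a * u ^ 2 - b * u + c) := by
  have amgm : 0 ≤ b * (u - w) ^ 2 := by positivity
  have mono : (2 * w * a - b) * s ≤ (2 * w * a - b) * u ^ 2 :=
    mul_le_mul_of_nonneg_left hu (sub_nonneg.2 hab)
  linear_combination amgm + mono

/-- The quadratic `Q(u)` in `u = Rδ/ε` for which
`(R-2)B₁ - (R-3)(kR-2)δ = (ε/R) Q(u) + k²/ℓ`. -/
noncomputable def excessQuadratic (k R u : ℝ) : ℝ :=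
  (R + 2 - k / 2) * u ^ 2 - (R ^ 2 + k * R + 2 - 2 * k) * u + (2 * R ^ 2 - 4 * R - 2 * k)

section Positivity

variable {k R : ℝ}

lemma excessQuadratic_lower_bound_pos (hk₁ : 1 ≤ k) (hk₃ : k ≤ 3) (hR₂ : 2 < R) (hR₄ : R ≤ 4) :
    0 < ((R + 2 * k) * (R + 2 - k / 2) - (R ^ 2 + k * R + 2 - 2 * k)) * (2 * k * R)
      - (R ^ 2 + k * R + 2 - 2 * k) * ((R + 2 * k) / 2) ^ 2
      + (R + 2 * k) * (2 * R ^ 2 - 4 * R - 2 * k) := by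
  obtain ⟨x, rfl⟩ : ∃ x, k = 1 + x := ⟨k - 1, by ring⟩
  obtain ⟨y, rfl⟩ : ∃ y, R = 2 + y := ⟨R - 2, by ring⟩
  have hx : 0 ≤ x := by linarith
  have hx₂ : 0 ≤ 2 - x := by linarith
  have hy : 0 < y := by linarith
  have hy₂ : 0 ≤ 2 - y := by linarith
  -- The expansion in `x` and `y`, with each negative term absorbed by a factor `2 - x` or `2 - y`.
  have certificate : 0 < y * (8 + (2 - y) * (y ^ 2 + 7 * y + 8))
      + x * (2 - y) * (5 * y ^ 2 + 22 * y + 24) + 4 * y * (2 - x)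
      + x ^ 2 * (2 - x) * (16 + 12 * y) + x * (2 - x) * (8 + 20 * y + 4 * y ^ 2) := by
    positivity
  linear_combination certificate / 4

lemma excessQuadratic_pos {u : ℝ} (hk₁ : 1 ≤ k) (hk₃ : k ≤ 3) (hR₂ : 2 < R) (hR₄ : R ≤ 4)
    (hu : 2 * k * R ≤ u ^ 2) : 0 < excessQuadratic k R u := by
  have hb : 0 ≤ R ^ 2 + k * R + 2 - 2 * k := by nlinarith
  have hab : R ^ 2 + k * R + 2 - 2 * k ≤ 2 * ((R + 2 * k) / 2) * (R + 2 - k / 2) := by nlinarith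
  have lower := quadratic_ge_of_le_sq (c := 2 * R ^ 2 - 4 * R - 2 * k) hb hab hu
  rw [mul_div_cancel₀ _ two_ne_zero] at lower
  exact pos_of_mul_pos_right ((excessQuadratic_lower_bound_pos hk₁ hk₃ hR₂ hR₄).trans_le lower)
    (by linarith)

end Positivity

section SonicPoint

variable {k ℓ γ ε A B a₁ δ R u a₂ B₁ : ℝ}

lemma R_mul_delta_sq_eq_of_root (hroot : a₁ ^ 2 - ((k - 2) * ε + A) * a₁ + 2 * (k - A) * ε = 0)
    (hδ : δ = A + k * ε - a₁) (hRδ : R * δ = a₁ + 2 * ε) :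
    R * δ ^ 2 = 2 * k * ε * (1 + ε) := by
  calc R * δ ^ 2 = (a₁ + 2 * ε) * (A + k * ε - a₁) := by rw [← hRδ, ← hδ]; ring
    _ = 2 * k * ε * (1 + ε) := by linear_combination -hroot

lemma delta_mul_u_eq (hε : ε ≠ 0) (hRδ2 : R * δ ^ 2 = 2 * k * ε * (1 + ε)) (hu : R * δ = ε * u) :
    δ * u = 2 * k * (1 + ε) := by
  refine mul_left_cancel₀ hε ?_
  linear_combination hRδ2 - δ * hu

lemma eps_mul_u_sq_eq (hδu : δ * u = 2 * k * (1 + ε)) (hu : R * δ = ε * u) :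
    ε * u ^ 2 = 2 * k * R * (1 + ε) := by
  linear_combination R * hδu - u * hu

lemma two_mul_k_mul_R_lt_u_sq (hk : 0 < k) (hR : 0 < R) (hε : 0 < ε)
    (hδu : δ * u = 2 * k * (1 + ε)) (hu : R * δ = ε * u) : 2 * k * R < u ^ 2 := by
  refine lt_of_mul_lt_mul_left ?_ hε.le
  have hpos : 0 < 2 * k * R := mul_pos (mul_pos two_pos hk) hR
  linear_combination hpos - eps_mul_u_sq_eq hδu hu

lemma two_mul_ell_sub_k_mul_gamma_eq (hA : A = k + 2 - (k - 2 * ℓ) * γ)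
    (hR1δ : (R + 1) * δ = (k + 2) * ε + A) (hδu : δ * u = 2 * k * (1 + ε)) :
    2 * k * ((2 * ℓ - k) * γ) = δ * (2 * k * (R + 1) - (k + 2) * u) := by
  linear_combination -2 * k * hA - 2 * k * hR1δ + (k + 2) * hδu

lemma two_mul_ell_sub_k_sq_eq (hδ : δ ≠ 0) (hε : ε = ℓ * γ ^ 2 - 1)
    (hA : A = k + 2 - (k - 2 * ℓ) * γ) (hR1δ : (R + 1) * δ = (k + 2) * ε + A)
    (hRδ2 : R * δ ^ 2 = 2 * k * ε * (1 + ε)) (hδu : δ * u = 2 * k * (1 + ε)) :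
    2 * k * R * (2 * ℓ - k) ^ 2 = ℓ * ε * (2 * k * (R + 1) - (k + 2) * u) ^ 2 := by
  refine mul_left_cancel₀ (pow_ne_zero 2 hδ) ?_
  calc δ ^ 2 * (2 * k * R * (2 * ℓ - k) ^ 2)
      = 4 * k ^ 2 * ε * (1 + ε) * (2 * ℓ - k) ^ 2 := by
        linear_combination 2 * k * (2 * ℓ - k) ^ 2 * hRδ2
    _ = ℓ * ε * (2 * k * ((2 * ℓ - k) * γ)) ^ 2 := by
        linear_combination 4 * k ^ 2 * ε * (2 * ℓ - k) ^ 2 * hε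
    _ = δ ^ 2 * (ℓ * ε * (2 * k * (R + 1) - (k + 2) * u) ^ 2) := by
        rw [two_mul_ell_sub_k_mul_gamma_eq hA hR1δ hδu]; ring

lemma R_sub_two_mul_u_mul_a₂_eq (hε : ε ≠ 0) (hδ : δ ≠ 0) (hR : R ≠ 2) (ha₁ : a₁ = ε * (u - 2))
    (hB : B = 2 * k + 1 - ℓ) (hR1δ : (R + 1) * δ = (k + 2) * ε + A) (hu : R * δ = ε * u)
    (ha₂ : a₂ = ((k - 1) * a₁ ^ 2 - (B - A + 2 * k) * a₁ + 2 * (k - B) * ε) / ((R - 2) * δ)) :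
    (R - 2) * u * a₂ = (k - 1) * R * ε * (u - 2) ^ 2
      - ((4 * k + 1 - ℓ) * R - (R + 1) * ε * u + (k + 2) * R * ε) * (u - 2)
      - 2 * (k + 1 - ℓ) * R := by
  have hmul : (R - 2) * δ * a₂
      = (k - 1) * a₁ ^ 2 - (B - A + 2 * k) * a₁ + 2 * (k - B) * ε := by
    rw [ha₂, mul_div_cancel₀ _ (mul_ne_zero (sub_ne_zero.2 hR) hδ)]
  have hA' : A = (R + 1) * δ - (k + 2) * ε := by linear_combination -hR1δ
  refine mul_left_cancel₀ hε ?_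
  rw [ha₁, hB, hA'] at hmul
  linear_combination R * hmul + ((R + 1) * ε * (u - 2) - (R - 2) * a₂) * hu

lemma two_mul_k_mul_R_mul_excess_eq (hu₀ : u ≠ 0) (ha₁ : a₁ = ε * (u - 2)) (hB : B = 2 * k + 1 - ℓ)
    (hu : R * δ = ε * u) (hεu : ε * u ^ 2 = 2 * k * R * (1 + ε))
    (ha₂ : (R - 2) * u * a₂ = (k - 1) * R * ε * (u - 2) ^ 2
      - ((4 * k + 1 - ℓ) * R - (R + 1) * ε * u + (k + 2) * R * ε) * (u - 2)
      - 2 * (k + 1 - ℓ) * R)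
    (hB₁ : B₁ = (3 * k - 1) * a₁ - 2 * a₂ - 2 * (k + B)) :
    2 * k * R * ((R - 2) * B₁ - (R - 3) * (k * R - 2) * δ)
      = 2 * k * ε * excessQuadratic k R u
        + ε * (2 * k * (R + 1) - (k + 2) * u) ^ 2 - 8 * k * R * (ℓ - k) := by
  refine mul_left_cancel₀ hu₀ ?_
  unfold excessQuadratic
  rw [hB₁, hB, ha₁]
  linear_combination -4 * k * R * ha₂ - 2 * k * u * (R - 3) * (k * R - 2) * hu
    - (2 * R * ((4 * k + 1) * (u - 2) + 2 * (k + 1)) - 2 * u * (R - 2) * (3 * k + 1)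
      - 4 * k * u) * hεu

lemma excess_eq (hk : k ≠ 0) (hℓ : ℓ ≠ 0) (hR₀ : R ≠ 0) (hR₂ : R ≠ 2) (hδ₀ : δ ≠ 0)
    (hε₀ : ε ≠ 0) (hε : ε = ℓ * γ ^ 2 - 1) (hA : A = k + 2 - (k - 2 * ℓ) * γ)
    (hB : B = 2 * k + 1 - ℓ) (hRδ : R * δ = a₁ + 2 * ε) (hR1δ : (R + 1) * δ = (k + 2) * ε + A)
    (hRδ2 : R * δ ^ 2 = 2 * k * ε * (1 + ε)) (hu : R * δ = ε * u)
    (ha₂ : a₂ = ((k - 1) * a₁ ^ 2 - (B - A + 2 * k) * a₁ + 2 * (k - B) * ε) / ((R - 2) * δ))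
    (hB₁ : B₁ = (3 * k - 1) * a₁ - 2 * a₂ - 2 * (k + B)) :
    (R - 2) * B₁ - (R - 3) * (k * R - 2) * δ = ε / R * excessQuadratic k R u + k ^ 2 / ℓ := by
  have ha₁ : a₁ = ε * (u - 2) := by linear_combination hu - hRδ
  have hu₀ : u ≠ 0 := right_ne_zero_of_mul (hu ▸ mul_ne_zero hR₀ hδ₀)
  have hδu := delta_mul_u_eq hε₀ hRδ2 hu
  have hsq := two_mul_ell_sub_k_sq_eq hδ₀ hε hA hR1δ hRδ2 hδu
  have hexcess := two_mul_k_mul_R_mul_excess_eq hu₀ ha₁ hB hu (eps_mul_u_sq_eq hδu hu)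
    (R_sub_two_mul_u_mul_a₂_eq hε₀ hδ₀ hR₂ ha₁ hB hR1δ hu ha₂) hB₁
  field_simp
  refine mul_left_cancel₀ (mul_ne_zero two_ne_zero hk) ?_
  linear_combination ℓ * hexcess - hsq

end SonicPoint

theorem B1_lower_bound_k_le_two_general
    {k ℓ γ ε A B a₁ δ R a₂ B₁ : ℝ} (hk₁ : 1 ≤ k) (hk₃ : k ≤ 3)
    (hε : ε = ℓ * γ ^ 2 - 1) (hεpos : 0 < ε)
    (hA : A = k + 2 - (k - 2 * ℓ) * γ) (hB : B = 2 * k + 1 - ℓ)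
    (hroot : a₁ ^ 2 - ((k - 2) * ε + A) * a₁ + 2 * (k - A) * ε = 0)
    (hδ : δ = A + k * ε - a₁) (hδpos : 0 < δ) (hR : R = (a₁ + 2 * ε) / δ)
    (ha₂ : a₂ = ((k - 1) * a₁ ^ 2 - (B - A + 2 * k) * a₁ + 2 * (k - B) * ε) / ((R - 2) * δ))
    (hB₁ : B₁ = (3 * k - 1) * a₁ - 2 * a₂ - 2 * (k + B))
    (hR₂ : 2 < R) (hR₄ : R ≤ 4) :
    (R - 2) * B₁ > (R - 3) * (k * R - 2) * δ := by
  have hk : 0 < k := by linarith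
  have hRpos : 0 < R := by linarith
  have hℓ : 0 < ℓ := pos_of_mul_pos_left (by linarith : 0 < ℓ * γ ^ 2) (sq_nonneg γ)
  have hRδ : R * δ = a₁ + 2 * ε := by rw [hR, div_mul_cancel₀ _ hδpos.ne']
  have hR1δ : (R + 1) * δ = (k + 2) * ε + A := by linear_combination hRδ + hδ
  have hRδ2 := R_mul_delta_sq_eq_of_root hroot hδ hRδ
  have hu : R * δ = ε * (R * δ / ε) := (mul_div_cancel₀ _ hεpos.ne').symm
  have hQ := excessQuadratic_pos hk₁ hk₃ hR₂ hR₄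
    (two_mul_k_mul_R_lt_u_sq hk hRpos hεpos (delta_mul_u_eq hεpos.ne' hRδ2 hu) hu).le
  rw [gt_iff_lt, ← sub_pos, excess_eq hk.ne' hℓ.ne' hRpos.ne' hR₂.ne' hδpos.ne' hεpos.ne' hε hA hB
    hRδ hR1δ hRδ2 hu ha₂ hB₁]
  positivity

/-- For `k ∈ {1, 2}` and `R ∈ [3, 4]`, one has `(R−2) B₁ > (R−3)(kR−2) δ`. -/
theorem B1_lower_bound_k_le_two
    (k : ℕ) (hk : 1 ≤ k) (ℓ γ ε A B a₁ δ R : ℝ)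
    (hℓ : 1 < ℓ) (hγ : 1 / Real.sqrt ℓ < γ)
    (hε : ε = ℓ * γ ^ 2 - 1) (hεpos : 0 < ε)
    (hA : A = (k : ℝ) + 2 - ((k : ℝ) - 2 * ℓ) * γ)
    (hB : B = 2 * (k : ℝ) + 1 - ℓ)
    (hdisc : 0 < (((k : ℝ) - 2) * ε + A) ^ 2 - 8 * ((k : ℝ) - A) * ε)
    (ha₁ : a₁ = ((((k : ℝ) - 2) * ε + A)
        + Real.sqrt ((((k : ℝ) - 2) * ε + A) ^ 2 - 8 * ((k : ℝ) - A) * ε)) / 2)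
    (hδ : δ = A + (k : ℝ) * ε - a₁) (hδpos : 0 < δ)
    (hR : R = (a₁ + 2 * ε) / δ) (hR1 : 1 < R)
    (hRδ : R * δ = a₁ + 2 * ε)
    (hR1δ : (R + 1) * δ = ((k : ℝ) + 2) * ε + A)
    (hRδ2 : R * δ ^ 2 = 2 * (k : ℝ) * ε * (1 + ε))
    (a₂ B₁ : ℝ)
    (ha₂ : a₂ = (((k : ℝ) - 1) * a₁ ^ 2 - (B - A + 2 * (k : ℝ)) * a₁ + 2 * ((k : ℝ) - B) * ε)
        / ((R - 2) * δ))
    (hB₁ : B₁ = (3 * (k : ℝ) - 1) * a₁ - 2 * a₂ - 2 * ((k : ℝ) + B))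
    (hk12 : k = 1 ∨ k = 2) (hR3 : 3 ≤ R) (hR4 : R ≤ 4) :
    (R - 2) * B₁ > (R - 3) * ((k : ℝ) * R - 2) * δ := by
  have hroot : a₁ ^ 2 - (((k : ℝ) - 2) * ε + A) * a₁ + 2 * ((k : ℝ) - A) * ε = 0 := by
    linear_combination δ * hRδ - hRδ2 + (a₁ + 2 * ε) * hδ
  have hk₃ : (k : ℝ) ≤ 3 := by rcases hk12 with rfl | rfl <;> norm_num
  exact B1_lower_bound_k_le_two_general (by exact_mod_cast hk) hk₃ hε hεpos hA hB hroot hδ hδpos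
    hR ha₂ hB₁ (by linarith) hR4
end
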